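/- Fix K₀ > 0. There exist constants M, C ≥ 1 such that for all sufficiently small h > 0 and all z ∈ ℂ with |Re z| ≤ K₀ and d(z) ≥ M h^{2/3}: t₀(z,h)² ≤ C d(z)^{1/2} h e^{−2S(z)/h}, and t₁(z,h)² − t₀(z,h)² ≥ d(z)^{1/2} h / C. Here t₀(z,h)² := inf{ ‖(P_h − z)u‖² : u smooth 2π-periodic, ‖u‖ = 1 } and t₁(z,h)² := sup_{v ∈ L²} inf{ ‖(P_h − z)u‖² : u smooth 2π-periodic, ‖u‖ = 1, ⟨u, v⟩_{L²} = 0 }, i.e. t₀² and t₁² are the two smallest eigenvalues of the self-adjoint operator Q(z) = (P_h − z)*(P_h − z). -/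

import Mathlib

/-!
Write `φ = Im g`, `t = Im z`, `s = d(z) ^ (1/2)`, and let `p = x₊`, `q = x₋` be the turning points
at the level `t`. The line carries the explicit solution `e` of `(P_h - z) e = 0` with `e(p) = 1`
(`lineSol`), and `|e| = exp (-Φ / h)` where `Φ` is the primitive of `t - φ` vanishing at `p`. On the
period `[q - 2π, q]` the phase `Φ` is minimal at `p` and at least `S` at both ends, so `e` is
concentrated near `p` and exponentially small where it fails to be periodic.

*Upper bound on `t₀²`* (`upper_bound`). Cutting `e` off within `w = (h / s) ^ (1/2)` of the ends of
the period and periodizing gives a test function. Near a turning point `|t - φ|` is at most a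
multiple of `s` times the distance, so `Φ` varies there by `O(s w²) = O(h)`, and the Rayleigh
quotient is `O(h² / w²) exp (-2 S / h) = O(s h) exp (-2 S / h)`.

*Lower bound on `t₁²`* (`lower_bound`). Take for `v` the periodization of `e`. If `u ⟂ v`, then
`V = u - u(p) e` has norm at least `‖u‖`, vanishes at `p`, and solves the first order equation
`h V' = (φ - t - i Re (g - z)) V + i (P_h - z) u` on the whole period. Away from `p` in both
directions this equation is damped, by at least a multiple of `s` times the distance to the turning
points, and a weighted energy estimate with a piecewise affine weight (`energy_right`, `energy_left`)
gives `‖V‖² ≲ ‖(P_h - z) u‖² / (s h)`.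

Both parts use only the nondegeneracy of the critical points, through `geometry`: the turning
points are `≳ s` apart and `|t - φ| ≳ s · dist` on the period, uniformly in `z`. The condition
`d ≥ M h^{2/3}` says `s³ ≳ h`, which makes the scale `(h / s) ^ (1/2)` smaller than the gaps between
turning points; moreover `S ≳ s³`, so for large `M` the factor `exp (-2 S / h)` is small enough for
`t₀²` to be at most half of the lower bound for `t₁²`.
-/

open Set MeasureTheory

noncomputable section

/-- The action `S` as a function of `t = Im z`. -/
def Sfun (g : ℝ → ℂ) (xp xm : ℝ → ℝ) (t : ℝ) : ℝ :=
  min (∫ y in xp t..xm t, (t - (g y).im)) (∫ y in xp t..(xm t - 2 * Real.pi), (t - (g y).im))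

/-- The operator `P_h u = (h/i) u' + g u`. -/
def PhOp (g : ℝ → ℂ) (h : ℝ) (u : ℝ → ℂ) : ℝ → ℂ :=
  fun x => ((h : ℂ) / Complex.I) * deriv u x + g x * u x

/-- The `L²` norm over one period. -/
def normL2 (u : ℝ → ℂ) : ℝ := Real.sqrt (∫ x in (0:ℝ)..(2 * Real.pi), ‖u x‖ ^ 2)

/-- `t₀(z,h)² = inf { ‖(P_h - z)u‖² : u smooth 2π-periodic, ‖u‖ = 1 }`. -/
def t0sq (g : ℝ → ℂ) (h : ℝ) (z : ℂ) : ℝ :=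
  sInf {r : ℝ | ∃ u : ℝ → ℂ, ContDiff ℝ (⊤ : ℕ∞) u ∧ (∀ x, u (x + 2 * Real.pi) = u x) ∧
    normL2 u = 1 ∧ r = (normL2 (fun x => PhOp g h u x - z * u x)) ^ 2}

/-- `t₁(z,h)² = sup_{v} inf { ‖(P_h - z)u‖² : u smooth 2π-periodic, ‖u‖ = 1, ⟨u,v⟩ = 0 }`. -/
def t1sq (g : ℝ → ℂ) (h : ℝ) (z : ℂ) : ℝ :=
  sSup {r : ℝ | ∃ v : ℝ → ℂ,
    r = sInf {s : ℝ | ∃ u : ℝ → ℂ, ContDiff ℝ (⊤ : ℕ∞) u ∧ (∀ x, u (x + 2 * Real.pi) = u x) ∧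
      normL2 u = 1 ∧ (∫ x in (0:ℝ)..(2 * Real.pi), u x * (starRingEnd ℂ) (v x)) = 0 ∧
      s = (normL2 (fun x => PhOp g h u x - z * u x)) ^ 2}}

/-! ### Lower bounds for `Im g` near turning points -/

/-- A function with simple zeros at both ends of `[a, b]` and positive in between dominates a
multiple of `(x - a) * (b - x)`: after the two zeros are divided out, the quotient (a twofold
`dslope`) is continuous and does not vanish on the compact interval. -/
theorem deriv_lower {f : ℝ → ℝ} {a b A B : ℝ} (hab : a < b) (hf : Continuous f)
    (fa : f a = 0) (fb : f b = 0) (hA : HasDerivAt f A a) (hB : HasDerivAt f B b)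
    (hA0 : 0 < A) (hB0 : B < 0) (hpos : ∀ x ∈ Ioo a b, 0 < f x) :
    ∃ c : ℝ, 0 < c ∧ ∀ x ∈ Icc a b, c * ((x - a) * (b - x)) ≤ f x := by
  set D := dslope f a with hD
  set R := dslope D b with hR
  have h1 : ∀ x, (x - a) * D x = f x := by
    intro x
    have := sub_smul_dslope f a x
    simpa [fa] using this
  have Db : D b = 0 := by
    have := h1 b
    rw [fb] at this
    rcases mul_eq_zero.1 this with h | h
    · linarith
    · exact h
  have h2 : ∀ x, (x - b) * R x = D x := by
    intro x
    have := sub_smul_dslope D b x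
    simpa [Db] using this
  have Da : D a = A := by rw [hD, dslope_same, hA.deriv]
  have hDb : DifferentiableAt ℝ D b :=
    (differentiableAt_dslope_of_ne hab.ne').2 hB.differentiableAt
  have hDc : Continuous D := by
    rw [continuous_iff_continuousAt]
    intro x
    by_cases hx : x = a
    · subst hx; exact continuousAt_dslope_same.2 hA.differentiableAt
    · exact (continuousAt_dslope_of_ne hx).2 hf.continuousAt
  have hRc : Continuous R := by
    rw [continuous_iff_continuousAt]
    intro x
    by_cases hx : x = b
    · subst hx; exact continuousAt_dslope_same.2 hDb
    · exact (continuousAt_dslope_of_ne hx).2 hDc.continuousAt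
  have Rb : (b - a) * R b = B := by
    have e1 : HasDerivAt (fun x => (x - a) * D x) (1 * D b + (b - a) * deriv D b) b :=
      ((hasDerivAt_id b).sub_const a).mul hDb.hasDerivAt
    have e2 : (fun x => (x - a) * D x) = f := funext h1
    rw [e2, Db] at e1
    have := e1.unique hB
    rw [hR, dslope_same]; linarith
  have hneg : ∀ x ∈ Icc a b, R x < 0 := by
    intro x hx
    rcases eq_or_lt_of_le hx.1 with h | h
    · subst h
      have := h2 a
      rw [Da] at this
      nlinarith
    rcases eq_or_lt_of_le hx.2 with h' | h'
    · subst h'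
      nlinarith
    · have := hpos x ⟨h, h'⟩
      rw [← h1, ← h2] at this
      have : 0 < ((x - a) * (b - x)) * (- R x) := by linarith
      have := (pos_iff_pos_of_mul_pos this).1 (mul_pos (by linarith) (by linarith))
      linarith
  obtain ⟨x0, hx0, hmax⟩ := isCompact_Icc.exists_isMaxOn (nonempty_Icc.2 hab.le) hRc.continuousOn
  refine ⟨- R x0, by linarith [hneg x0 hx0], ?_⟩
  intro x hx
  have hm : R x ≤ R x0 := hmax hx
  have : 0 ≤ (x - a) * (b - x) := mul_nonneg (by linarith [hx.1]) (by linarith [hx.2])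
  rw [← h1, ← h2]
  nlinarith

/-- Behaviour of `φ` near a level point `x` of an increasing branch `[a, b]` between two
nondegenerate critical points, in terms of `s`, where `s ^ 2` is at most the distance of `φ x` to
the critical values: `x` stays at distance `≥ s / D` from the critical points, and `φ` moves away
from the level `φ x` with slope at least a multiple of `s`, up to the critical points. -/
theorem half_bounds {φ f : ℝ → ℝ} {a b c D : ℝ} (hφ : ∀ x, HasDerivAt φ (f x) x)
    (hD : 0 < D) (hlip : ∀ x y, |f x - f y| ≤ D ^ 2 * |x - y|) (fa : f a = 0) (fb : f b = 0)
    (hc : 0 < c) (hlow : ∀ x ∈ Icc a b, c * ((x - a) * (b - x)) ≤ f x)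
    {x s : ℝ} (hx : x ∈ Icc a b) (hs : 0 ≤ s) (hsa : s ^ 2 ≤ φ x - φ a) (hsb : s ^ 2 ≤ φ b - φ x) :
    s ≤ D * (x - a) ∧ s ≤ D * (b - x) ∧
    (∀ y ∈ Icc a x, c * (b - a) / (4 * D) * s * (x - y) ≤ φ x - φ y) ∧
    (∀ y ∈ Icc x b, c * (b - a) / (4 * D) * s * (y - x) ≤ φ y - φ x) := by
  have hcont : Continuous φ := continuous_iff_continuousAt.2 fun x => (hφ x).continuousAt
  have h1 : s ≤ D * (x - a) := by
    have : φ x - φ a ≤ D ^ 2 * (x - a) * (x - a) := by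
      refine Convex.image_sub_le_mul_sub_of_deriv_le (convex_Icc a x) hcont.continuousOn
        (fun y _ => (hφ y).differentiableAt.differentiableWithinAt) ?_ a
        ⟨le_rfl, hx.1⟩ x ⟨hx.1, le_rfl⟩ hx.1
      intro y hy
      rw [interior_Icc] at hy
      rw [(hφ y).deriv]
      have := hlip y a
      rw [fa, sub_zero, abs_of_nonneg (by linarith [hy.1] : 0 ≤ y - a)] at this
      have h3 := le_abs_self (f y)
      have : D ^ 2 * (y - a) ≤ D ^ 2 * (x - a) := by gcongr; exact hy.2.le
      linarith
    refine abs_le_of_sq_le_sq' (by nlinarith) (mul_nonneg hD.le (by linarith [hx.1])) |>.2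
  have h2 : s ≤ D * (b - x) := by
    have : φ b - φ x ≤ D ^ 2 * (b - x) * (b - x) := by
      refine Convex.image_sub_le_mul_sub_of_deriv_le (convex_Icc x b) hcont.continuousOn
        (fun y _ => (hφ y).differentiableAt.differentiableWithinAt) ?_ x
        ⟨le_rfl, hx.2⟩ b ⟨hx.2, le_rfl⟩ hx.2
      intro y hy
      rw [interior_Icc] at hy
      rw [(hφ y).deriv]
      have := hlip y b
      rw [fb, sub_zero, abs_of_nonpos (by linarith [hy.2] : y - b ≤ 0)] at this
      have h3 := le_abs_self (f y)
      have : D ^ 2 * (-(y - b)) ≤ D ^ 2 * (b - x) := by gcongr; linarith [hy.1]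
      linarith
    refine abs_le_of_sq_le_sq' (by nlinarith) (mul_nonneg hD.le (by linarith [hx.2])) |>.2
  have hq : (b - a) / (2 * D) * s ≤ (x - a) * (b - x) := by
    rw [div_mul_eq_mul_div, div_le_iff₀ (by positivity)]
    rcases le_total (x - a) (b - x) with h | h
    · nlinarith [mul_le_mul_of_nonneg_right h1 (sub_nonneg.2 (hx.1.trans hx.2)), hx.1,
        mul_nonneg hD.le (sub_nonneg.2 hx.1)]
    · nlinarith [mul_le_mul_of_nonneg_right h2 (sub_nonneg.2 (hx.1.trans hx.2)), hx.2,
        mul_nonneg hD.le (sub_nonneg.2 hx.2)]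
  set Q : ℝ → ℝ := fun x => (a + b) * x ^ 2 / 2 - x ^ 3 / 3 - a * b * x with hQ
  have hQd : ∀ x, HasDerivAt Q ((x - a) * (b - x)) x := by
    intro x
    have := ((((hasDerivAt_pow 2 x).const_mul (a + b)).div_const 2).sub
      ((hasDerivAt_pow 3 x).div_const 3)).sub ((hasDerivAt_id x).const_mul (a * b))
    exact this.congr_deriv (by push_cast; ring)
  have hmono : MonotoneOn (fun x => φ x - c * Q x) (Icc a b) := by
    have hd : ∀ y, HasDerivAt (fun x => φ x - c * Q x) (f y - c * ((y - a) * (b - y))) y :=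
      fun y => (hφ y).sub ((hQd y).const_mul c)
    refine monotoneOn_of_deriv_nonneg (convex_Icc a b)
      (continuous_iff_continuousAt.2 fun x => (hd x).continuousAt).continuousOn
      (fun y _ => (hd y).differentiableAt.differentiableWithinAt) ?_
    intro y hy
    rw [interior_Icc] at hy
    rw [(hd y).deriv]
    linarith [hlow y ⟨hy.1.le, hy.2.le⟩]
  have hqc : c * (b - a) / (4 * D) * s ≤ c * ((x - a) * (b - x)) / 2 := by
    have := mul_le_mul_of_nonneg_left hq hc.le
    have e : c * (b - a) / (4 * D) * s = c * ((b - a) / (2 * D) * s) / 2 := by field_simp; ring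
    rw [e]; linarith
  refine ⟨h1, h2, ?_, ?_⟩
  · intro y hy
    have hm := hmono ⟨hy.1, hy.2.trans hx.2⟩ hx hy.2
    simp only at hm
    have hQQ : (x - y) * ((x - a) * (b - x)) / 2 ≤ Q x - Q y := by
      have e : Q x - Q y = (x - y) * ((x - a) * (b - x)) / 2 + (x - y) * ((y - a) * (b - y)) / 2
        + (x - y) ^ 3 / 6 := by simp only [hQ]; ring
      rw [e]
      have h0 : 0 ≤ x - y := by linarith [hy.2]
      have h3 : 0 ≤ (y - a) * (b - y) := mul_nonneg (by linarith [hy.1]) (by linarith [hy.2, hx.2])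
      have := mul_nonneg h0 h3
      have := pow_nonneg h0 3
      linarith
    have h4 := mul_le_mul_of_nonneg_right hqc (by linarith [hy.2] : 0 ≤ x - y)
    have h5 := mul_le_mul_of_nonneg_left hQQ hc.le
    linarith
  · intro y hy
    have hm := hmono hx ⟨hx.1.trans hy.1, hy.2⟩ hy.1
    simp only at hm
    have hQQ : (y - x) * ((x - a) * (b - x)) / 2 ≤ Q y - Q x := by
      have e : Q y - Q x = (y - x) * ((x - a) * (b - x)) / 2 + (y - x) * ((y - a) * (b - y)) / 2
        + (y - x) ^ 3 / 6 := by simp only [hQ]; ring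
      rw [e]
      have h0 : 0 ≤ y - x := by linarith [hy.1]
      have h3 : 0 ≤ (y - a) * (b - y) := mul_nonneg (by linarith [hy.1, hx.1]) (by linarith [hy.2])
      have := mul_nonneg h0 h3
      have := pow_nonneg h0 3
      linarith
    have h4 := mul_le_mul_of_nonneg_right hqc (by linarith [hy.1] : 0 ≤ y - x)
    have h5 := mul_le_mul_of_nonneg_left hQQ hc.le
    linarith

theorem taylor_bound {φ f : ℝ → ℝ} {K : ℝ} (hφ : ∀ x, HasDerivAt φ (f x) x) (hK : 0 ≤ K)
    (hlip : ∀ x y, |f x - f y| ≤ K * |x - y|) (x y : ℝ) :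
    |φ y - φ x - f x * (y - x)| ≤ K * |y - x| ^ 2 := by
  have hd : ∀ u ∈ uIcc x y, HasDerivWithinAt (fun u => φ u - f x * u) (f u - f x) (uIcc x y) u :=
    fun u _ => ((hφ u).sub (by simpa using (hasDerivAt_id u).const_mul (f x))).hasDerivWithinAt
  have := (convex_uIcc x y).norm_image_sub_le_of_norm_hasDerivWithin_le (C := K * |y - x|) hd ?_
    left_mem_uIcc right_mem_uIcc
  · simp only [Real.norm_eq_abs] at this
    calc _ = |φ y - f x * y - (φ x - f x * x)| := by ring_nf
      _ ≤ _ := this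
      _ = _ := by ring
  · intro u hu
    refine (hlip u x).trans ?_
    exact mul_le_mul_of_nonneg_left (abs_sub_left_of_mem_uIcc hu) hK

/-- The geometric input on `φ = Im g`. With `s = d ^ (1/2)` and turning points `p`, `q` at the level
`t`: consecutive turning points are `≳ s` apart, `|t - φ|` is bounded below by `κ * s` times the
distance to the nearest turning point, and it is at most `L * s` times the distance to a turning
point within distance `s` of it. All constants are independent of `t`. -/
theorem geometry (φ : ℝ → ℝ) (a b : ℝ) (hg : ContDiff ℝ (⊤ : ℕ∞) φ)
    (hper : ∀ x, φ (x + 2 * Real.pi) = φ x)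
    (hab : a < b) (hb2 : b < a + 2 * Real.pi) (hga : φ a = 0)
    (hmin : StrictMonoOn φ (Icc a b))
    (hmax : StrictAntiOn φ (Icc b (a + 2 * Real.pi)))
    (hcrit : ∀ x ∈ Ico a (a + 2 * Real.pi), deriv φ x = 0 → x = a ∨ x = b)
    (ha'' : 0 < iteratedDeriv 2 φ a) (hb'' : iteratedDeriv 2 φ b < 0) :
    ∃ κ L c : ℝ, 0 < κ ∧ 0 < L ∧ 0 < c ∧ ∀ t ∈ Ioo 0 (φ b), ∀ s : ℝ, 0 ≤ s →
      s ^ 2 = min t (φ b - t) →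
      ∀ p ∈ Ioo (b - 2 * Real.pi) a, φ p = t → ∀ q ∈ Ioo a b, φ q = t →
      2 * c * s ≤ q - p ∧ 2 * c * s ≤ p - (q - 2 * Real.pi) ∧
      (∀ y ∈ Icc p q, κ * s * min (y - p) (q - y) ≤ t - φ y) ∧
      (∀ y ∈ Icc (q - 2 * Real.pi) p,
        κ * s * min (p - y) (y - (q - 2 * Real.pi)) ≤ φ y - t) ∧
      (∀ x y, φ x = t → |y - x| ≤ s → |t - φ y| ≤ L * s * |y - x|) := by
  set f := deriv φ with hf
  have hfs : ContDiff ℝ (⊤ : ℕ∞) f := (contDiff_infty_iff_deriv.1 hg).2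
  have hf2s : ContDiff ℝ (⊤ : ℕ∞) (deriv f) := (contDiff_infty_iff_deriv.1 hfs).2
  have hφd : ∀ x, HasDerivAt φ (f x) x :=
    fun x => ((contDiff_infty_iff_deriv.1 hg).1 x).hasDerivAt
  have hfd : ∀ x, HasDerivAt f (deriv f x) x :=
    fun x => ((contDiff_infty_iff_deriv.1 hfs).1 x).hasDerivAt
  have hi2 : ∀ x, iteratedDeriv 2 φ x = deriv f x := by
    intro x; rw [iteratedDeriv_succ, iteratedDeriv_one]
  rw [hi2] at ha'' hb''
  have hperφ : Function.Periodic φ (2 * Real.pi) := hper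
  have hperf : Function.Periodic f (2 * Real.pi) := by
    intro x
    have : (fun y => φ (y + 2 * Real.pi)) = φ := funext hper
    rw [hf, ← deriv_comp_add_const, this]
  have hperf2 : Function.Periodic (deriv f) (2 * Real.pi) := by
    intro x
    have : (fun y => f (y + 2 * Real.pi)) = f := funext hperf
    rw [← deriv_comp_add_const, this]
  have h2pi : 0 < 2 * Real.pi := Real.two_pi_pos
  -- global range of `φ`
  have hrange : ∀ x, 0 ≤ φ x ∧ φ x ≤ φ b := by
    intro x
    obtain ⟨y, hy, hxy⟩ := hperφ.exists_mem_Ico h2pi x a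
    rw [hxy]
    rcases le_total y b with h | h
    · have ha : a ∈ Icc a b := ⟨le_rfl, hab.le⟩
      have hb : b ∈ Icc a b := ⟨hab.le, le_rfl⟩
      rw [← hga]
      exact ⟨hmin.monotoneOn ha ⟨hy.1, h⟩ hy.1, hmin.monotoneOn ⟨hy.1, h⟩ hb h⟩
    · have ha : a + 2 * Real.pi ∈ Icc b (a + 2 * Real.pi) := ⟨hb2.le, le_rfl⟩
      have hb : b ∈ Icc b (a + 2 * Real.pi) := ⟨le_rfl, hb2.le⟩
      rw [← hga, ← hper a]
      exact ⟨hmax.antitoneOn ⟨h, hy.2.le⟩ ha hy.2.le, hmax.antitoneOn hb ⟨h, hy.2.le⟩ h⟩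
  have fa : f a = 0 := by
    have : IsLocalMin φ a := Filter.Eventually.of_forall fun x => by rw [hga]; exact (hrange x).1
    exact this.deriv_eq_zero
  have fb : f b = 0 := by
    have : IsLocalMax φ b := Filter.Eventually.of_forall fun x => (hrange x).2
    exact this.deriv_eq_zero
  have fa2 : f (a + 2 * Real.pi) = 0 := by rw [hperf, fa]
  -- Lipschitz bound for `f`
  obtain ⟨D, hD, hlip⟩ : ∃ D : ℝ, 0 < D ∧ ∀ x y, |f x - f y| ≤ D ^ 2 * |x - y| := by
    obtain ⟨B, hB⟩ := (hperf2.isBounded_of_continuous h2pi.ne' hf2s.continuous).exists_norm_le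
    refine ⟨Real.sqrt (|B| + 1), by positivity, fun x y => ?_⟩
    rw [Real.sq_sqrt (by positivity)]
    refine convex_univ.norm_image_sub_le_of_norm_hasDerivWithin_le
      (fun u _ => (hfd u).hasDerivWithinAt) (fun u _ => ?_) (mem_univ y) (mem_univ x)
    have := hB (deriv f u) (mem_range_self u)
    linarith [le_abs_self B]
  -- lower bounds
  have hpos1 : ∀ x ∈ Ioo a b, 0 < f x := by
    intro x hx
    have h0 : 0 ≤ f x := by
      have := hmin.monotoneOn.derivWithin_nonneg (x := x)
      rwa [derivWithin_of_mem_nhds (Icc_mem_nhds hx.1 hx.2)] at this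
    refine lt_of_le_of_ne h0 fun h => ?_
    rcases hcrit x ⟨hx.1.le, by linarith [hx.2]⟩ h.symm with h | h
    · exact hx.1.ne' h
    · exact hx.2.ne h
  have hpos2 : ∀ x ∈ Ioo b (a + 2 * Real.pi), f x < 0 := by
    intro x hx
    have h0 : f x ≤ 0 := by
      have := hmax.antitoneOn.derivWithin_nonpos (x := x)
      rwa [derivWithin_of_mem_nhds (Icc_mem_nhds hx.1 hx.2)] at this
    refine lt_of_le_of_ne h0 fun h => ?_
    rcases hcrit x ⟨by linarith [hx.1], hx.2⟩ h with h | h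
    · linarith [hx.1]
    · exact hx.1.ne' h
  obtain ⟨c1, hc1, hlow1⟩ := deriv_lower hab hfs.continuous fa fb (hfd a) (hfd b) ha'' hb'' hpos1
  -- the decreasing branch, reflected: `ψ x = φ (-x)` increases on `[-a, 2π - b]`
  have hab' : -a < 2 * Real.pi - b := by linarith
  have hψd : ∀ x, HasDerivAt (fun x => φ (-x)) (-f (-x)) x := by
    intro x
    exact ((hφd (-x)).comp x (hasDerivAt_neg x)).congr_deriv (by ring)
  have hψd2 : ∀ x, HasDerivAt (fun x => -f (-x)) (deriv f (-x)) x := by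
    intro x
    exact ((hfd (-x)).comp x (hasDerivAt_neg x)).neg.congr_deriv (by ring)
  have hfb' : f (-(2 * Real.pi - b)) = 0 := by
    rw [neg_sub, hperf.sub_eq, fb]
  obtain ⟨c2, hc2, hlow2⟩ := deriv_lower (f := fun x => -f (-x)) hab'
    (by have := hfs.continuous; fun_prop) (by simp [fa]) (by simp only [hfb', neg_zero])
    (hψd2 (-a)) (hψd2 (2 * Real.pi - b)) (by simpa using ha'')
    (by rw [neg_sub, hperf2.sub_eq]; exact hb'')
    (by
      intro x hx
      have := hpos2 (-x + 2 * Real.pi) ⟨by linarith [hx.2], by linarith [hx.1]⟩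
      rw [hperf] at this
      linarith)
  have hlip' : ∀ x y, |(-f (-x)) - (-f (-y))| ≤ D ^ 2 * |x - y| := by
    intro x y
    have := hlip (-y) (-x)
    calc _ = |f (-y) - f (-x)| := by ring_nf
      _ ≤ _ := this
      _ = _ := by ring_nf
  set κ1 := c1 * (b - a) / (4 * D)
  set κ2 := c2 * ((2 * Real.pi - b) - (-a)) / (4 * D)
  have hκ1 : 0 < κ1 := div_pos (mul_pos hc1 (by linarith)) (by linarith)
  have hκ2 : 0 < κ2 := div_pos (mul_pos hc2 (by linarith)) (by linarith)
  refine ⟨min κ1 κ2, 2 * D + D ^ 2, 1 / D, lt_min hκ1 hκ2, by positivity, by positivity, ?_⟩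
  intro t ht s hs hs2 p hp hpt q hq hqt
  have hst : s ^ 2 ≤ t := hs2 ▸ min_le_left _ _
  have hst' : s ^ 2 ≤ φ b - t := hs2 ▸ min_le_right _ _
  obtain ⟨A1, A2, A3, A4⟩ := half_bounds hφd hD hlip fa fb hc1 hlow1 (x := q) (s := s)
    ⟨hq.1.le, hq.2.le⟩ hs (by rw [hqt, hga]; linarith) (by rw [hqt]; linarith)
  obtain ⟨B1, B2, B3, B4⟩ := half_bounds (φ := fun x => φ (-x)) hψd hD hlip'
    (by simp [fa]) (by simp only [hfb', neg_zero]) hc2 hlow2 (x := -p) (s := s)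
    ⟨by linarith [hp.2], by linarith [hp.1]⟩ hs (by simp only [neg_neg]; rw [hpt, hga]; linarith)
    (by simp only [neg_neg, neg_sub]; rw [hperφ.sub_eq, hpt]; linarith)
  have hdiv : ∀ l : ℝ, s ≤ D * l → 1 / D * s ≤ l := by
    intro l hl
    rw [one_div, inv_mul_le_iff₀ hD]; exact hl
  have A1' := hdiv _ A1
  have A2' := hdiv _ A2
  have B1' := hdiv _ B1
  have B2' := hdiv _ B2
  have hfin : ∀ κ' u v r : ℝ, min κ1 κ2 ≤ κ' → 0 ≤ v → u ≤ v → κ' * s * v ≤ r →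
      min κ1 κ2 * s * u ≤ r := by
    intro κ' u v r h1 h2 h3 h4
    refine le_trans ?_ h4
    have hm : 0 ≤ min κ1 κ2 := (lt_min hκ1 hκ2).le
    calc _ ≤ min κ1 κ2 * s * v := by gcongr
      _ ≤ _ := by gcongr
  refine ⟨by linarith, by linarith, ?_, ?_, ?_⟩
  · intro y hy
    rcases le_total y a with h | h
    · refine hfin κ2 _ (y - p) _ (min_le_right _ _) (by linarith [hy.1]) (min_le_left _ _) ?_
      have := B3 (-y) ⟨by linarith, by linarith [hy.1]⟩
      simp only [neg_neg] at this
      rw [hpt] at this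
      linarith
    · refine hfin κ1 _ (q - y) _ (min_le_left _ _) (by linarith [hy.2]) (min_le_right _ _) ?_
      have := A3 y ⟨h, hy.2⟩
      rw [hqt] at this
      linarith
  · intro y hy
    rcases le_total y (b - 2 * Real.pi) with h | h
    · refine hfin κ1 _ (y - (q - 2 * Real.pi)) _ (min_le_left _ _) (by linarith [hy.1])
        (min_le_right _ _) ?_
      have := A4 (y + 2 * Real.pi) ⟨by linarith [hy.1], by linarith⟩
      rw [hqt, hper] at this
      linarith
    · refine hfin κ2 _ (p - y) _ (min_le_right _ _) (by linarith [hy.2]) (min_le_left _ _) ?_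
      have := B4 (-y) ⟨by linarith [hy.2], by linarith⟩
      simp only [neg_neg] at this
      rw [hpt] at this
      linarith
  · intro x y hxt hyx
    have hT := taylor_bound hφd (sq_nonneg D) hlip x
    -- `f x` is controlled by the distance of `φ x` to the extremal values: otherwise a step
    -- against (resp. along) the gradient would leave the range `[0, φ b]` of `φ`
    have hfx1 : f x ^ 2 ≤ 4 * D ^ 2 * t := by
      have h1 := (abs_le.1 (hT (x - f x / (2 * D ^ 2)))).2
      have h2 := (hrange (x - f x / (2 * D ^ 2))).1
      rw [hxt, sq_abs] at h1
      have e : D ^ 2 * (x - f x / (2 * D ^ 2) - x) ^ 2 + f x * (x - f x / (2 * D ^ 2) - x)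
        = - (f x ^ 2 / (4 * D ^ 2)) := by field_simp; ring
      have : f x ^ 2 / (4 * D ^ 2) ≤ t := by linarith
      rw [div_le_iff₀ (by positivity)] at this
      linarith
    have hfx2 : f x ^ 2 ≤ 4 * D ^ 2 * (φ b - t) := by
      have h1 := (abs_le.1 (hT (x + f x / (2 * D ^ 2)))).1
      have h2 := (hrange (x + f x / (2 * D ^ 2))).2
      rw [hxt, sq_abs] at h1
      have e : D ^ 2 * (x + f x / (2 * D ^ 2) - x) ^ 2 - f x * (x + f x / (2 * D ^ 2) - x)
        = - (f x ^ 2 / (4 * D ^ 2)) := by field_simp; ring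
      have : f x ^ 2 / (4 * D ^ 2) ≤ φ b - t := by linarith
      rw [div_le_iff₀ (by positivity)] at this
      linarith
    have hfx : |f x| ≤ 2 * D * s := by
      refine abs_le_of_sq_le_sq ?_ (by positivity)
      have : f x ^ 2 ≤ 4 * D ^ 2 * s ^ 2 := by
        rw [hs2]
        rcases min_choice t (φ b - t) with h | h <;> rw [h] <;> assumption
      linarith
    have h1 := hT y
    rw [hxt] at h1
    calc |t - φ y| = |(φ y - t - f x * (y - x)) + f x * (y - x)| := by
          rw [abs_sub_comm]; ring_nf
      _ ≤ D ^ 2 * |y - x| ^ 2 + |f x| * |y - x| := by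
          refine (abs_add_le _ _).trans ?_
          rw [abs_mul]; linarith
      _ ≤ D ^ 2 * (s * |y - x|) + 2 * D * s * |y - x| := by
          rw [pow_two |y - x|]; gcongr
      _ = _ := by ring

/-! ### Weighted energy estimates -/

/-- Energy identity for `V' = A V + r` with the affine weight `m x = m₀ + k * x`: integrate the
derivative of `m * ‖V‖ ^ 2`. The last hypothesis says that `m' + 2 m Re A ≤ -1`, so that the
quadratic term absorbs `∫ ‖V‖ ^ 2`, and the cross term is handled by `2ab ≤ a²/2 + 2b²`. -/
theorem energy_piece {V A r : ℝ → ℂ} (hV : ∀ x, HasDerivAt V (A x * V x + r x) x)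
    (hA : Continuous A) (hr : Continuous r) {α β w m₀ k : ℝ} (hαβ : α ≤ β)
    (hm0 : ∀ x ∈ Icc α β, 0 ≤ m₀ + k * x) (hm2 : ∀ x ∈ Icc α β, m₀ + k * x ≤ 2 * w)
    (hmA : ∀ x ∈ Icc α β, 1 + k ≤ -(A x).re * (2 * (m₀ + k * x))) :
    (m₀ + k * β) * ‖V β‖ ^ 2 - (m₀ + k * α) * ‖V α‖ ^ 2 + (∫ x in α..β, ‖V x‖ ^ 2) / 2
      ≤ 8 * w ^ 2 * ∫ x in α..β, ‖r x‖ ^ 2 := by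
  have hVc : Continuous V := continuous_iff_continuousAt.2 fun x => (hV x).continuousAt
  have hinner : ∀ x, inner ℝ (V x) (A x * V x + r x)
      = (A x).re * ‖V x‖ ^ 2 + inner ℝ (V x) (r x) := by
    intro x
    rw [inner_add_right]
    congr 1
    rw [Complex.inner, ← Complex.normSq_eq_norm_sq]
    simp [Complex.normSq_apply, Complex.mul_re, Complex.mul_im]
    ring
  have hd : ∀ x, HasDerivAt (fun x => (m₀ + k * x) * ‖V x‖ ^ 2)
      (k * ‖V x‖ ^ 2 + (m₀ + k * x) * (2 * ((A x).re * ‖V x‖ ^ 2 + inner ℝ (V x) (r x)))) x := by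
    intro x
    rw [← hinner x]
    have h1 : HasDerivAt (fun x => m₀ + k * x) k x := by
      simpa using ((hasDerivAt_id x).const_mul k).const_add m₀
    exact h1.mul (hV x).norm_sq
  have hcont : Continuous fun x => k * ‖V x‖ ^ 2 +
      (m₀ + k * x) * (2 * ((A x).re * ‖V x‖ ^ 2 + inner ℝ (V x) (r x))) := by
    have : Continuous fun x => (A x).re := Complex.continuous_re.comp hA
    fun_prop
  have hftc := intervalIntegral.integral_eq_sub_of_hasDerivAt (fun x _ => hd x)
    (hcont.intervalIntegrable α β)
  rw [← hftc, ← intervalIntegral.integral_const_mul, ← intervalIntegral.integral_div,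
    ← intervalIntegral.integral_add (hcont.intervalIntegrable _ _)
      (Continuous.intervalIntegrable (by fun_prop) _ _)]
  refine intervalIntegral.integral_mono_on hαβ (Continuous.intervalIntegrable (by fun_prop) _ _)
    (Continuous.intervalIntegrable (by fun_prop) _ _) ?_
  intro x hx
  have h1 := hm0 x hx
  have h2 := hm2 x hx
  have h3 := hmA x hx
  have h4 := real_inner_le_norm (V x) (r x)
  set m := m₀ + k * x
  have h5 : m * (2 * inner ℝ (V x) (r x)) ≤ ‖V x‖ ^ 2 / 2 + 8 * w ^ 2 * ‖r x‖ ^ 2 := by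
    have e1 : m * (2 * inner ℝ (V x) (r x)) ≤ m * (2 * (‖V x‖ * ‖r x‖)) := by gcongr
    have e2 : m ^ 2 * ‖r x‖ ^ 2 ≤ (2 * w) ^ 2 * ‖r x‖ ^ 2 := by gcongr
    nlinarith [sq_nonneg (‖V x‖ - 2 * m * ‖r x‖)]
  have h6 := mul_le_mul_of_nonneg_right h3 (sq_nonneg ‖V x‖)
  nlinarith

/-- If `V p = 0` and `Re A ≤ 0` on `[p, q]`, of size at least `w⁻²` times the distance to
the endpoints, then `‖V‖ ≤ 4 w ‖r‖` in `L²(p, q)`. The damping is too weak within `w` of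
the endpoints; there a decreasing weight is used, and the weight is constant in the middle. -/
theorem energy_right {V A r : ℝ → ℂ} (hV : ∀ x, HasDerivAt V (A x * V x + r x) x)
    (hA : Continuous A) (hr : Continuous r) {p q w : ℝ} (hw : 0 < w) (hpq : 2 * w ≤ q - p)
    (hF : ∀ x ∈ Icc p q, min (x - p) (q - x) ≤ w ^ 2 * (-(A x).re)) (hp : V p = 0) :
    (∫ x in p..q, ‖V x‖ ^ 2) ≤ 16 * w ^ 2 * ∫ x in p..q, ‖r x‖ ^ 2 := by
  have hVc : Continuous V := continuous_iff_continuousAt.2 fun x => (hV x).continuousAt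
  have hA0 : ∀ x ∈ Icc p q, 0 ≤ -(A x).re := by
    intro x hx
    have h1 : 0 ≤ min (x - p) (q - x) := le_min (by linarith [hx.1]) (by linarith [hx.2])
    exact nonneg_of_mul_nonneg_right (h1.trans (hF x hx)) (by positivity)
  -- the weight is `2w - (x - p)` on `[p, p + w]`, then `w`, then `q - x` on `[q - w, q]`; it is
  -- continuous and vanishes at `q`, so that all boundary terms cancel
  have P1 := energy_piece hV hA hr (α := p) (β := p + w) (w := w) (m₀ := 2 * w + p) (k := -1)
    (by linarith) (fun x hx => by linarith [hx.2]) (fun x hx => by linarith [hx.1])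
    (fun x hx => by
      have := mul_nonneg (hA0 x ⟨hx.1, by linarith [hx.2]⟩)
        (by linarith [hx.2] : 0 ≤ 2 * (2 * w + p + -1 * x))
      linarith)
  have P2 := energy_piece hV hA hr (α := p + w) (β := q - w) (w := w) (m₀ := w) (k := 0)
    (by linarith) (fun x hx => by linarith) (fun x hx => by linarith)
    (fun x hx => by
      have h1 := hF x ⟨by linarith [hx.1], by linarith [hx.2]⟩
      have h2 : w ≤ min (x - p) (q - x) := le_min (by linarith [hx.1]) (by linarith [hx.2])
      have h3 : 1 ≤ w * (-(A x).re) := by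
        have : w * 1 ≤ w * (w * (-(A x).re)) := by linarith
        exact le_of_mul_le_mul_left this hw
      linarith)
  have P3 := energy_piece hV hA hr (α := q - w) (β := q) (w := w) (m₀ := q) (k := -1)
    (by linarith) (fun x hx => by linarith [hx.2]) (fun x hx => by linarith [hx.1])
    (fun x hx => by
      have := mul_nonneg (hA0 x ⟨by linarith [hx.1], hx.2⟩)
        (by linarith [hx.2] : 0 ≤ 2 * (q + -1 * x))
      linarith)
  have hVi : ∀ c d, IntervalIntegrable (fun x => ‖V x‖ ^ 2) volume c d :=
    fun c d => Continuous.intervalIntegrable (by fun_prop) _ _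
  have hri : ∀ c d, IntervalIntegrable (fun x => ‖r x‖ ^ 2) volume c d :=
    fun c d => Continuous.intervalIntegrable (by fun_prop) _ _
  rw [← intervalIntegral.integral_add_adjacent_intervals (hVi p (p + w)) (hVi _ q),
    ← intervalIntegral.integral_add_adjacent_intervals (hVi (p + w) (q - w)) (hVi _ q),
    ← intervalIntegral.integral_add_adjacent_intervals (hri p (p + w)) (hri _ q),
    ← intervalIntegral.integral_add_adjacent_intervals (hri (p + w) (q - w)) (hri _ q)]
  rw [hp] at P1
  simp only [norm_zero] at P1
  ring_nf at P1 P2 P3 ⊢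
  linarith

/-- The mirror image of `energy_right`, for an interval `[q, p]` to the left of `p`. -/
theorem energy_left {V A r : ℝ → ℂ} (hV : ∀ x, HasDerivAt V (A x * V x + r x) x)
    (hA : Continuous A) (hr : Continuous r) {p q w : ℝ} (hw : 0 < w) (hpq : 2 * w ≤ p - q)
    (hF : ∀ x ∈ Icc q p, min (p - x) (x - q) ≤ w ^ 2 * (A x).re) (hp : V p = 0) :
    (∫ x in q..p, ‖V x‖ ^ 2) ≤ 16 * w ^ 2 * ∫ x in q..p, ‖r x‖ ^ 2 := by
  have := energy_right (V := fun x => V (-x)) (A := fun x => -A (-x)) (r := fun x => -r (-x))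
    (fun x => ((hV (-x)).scomp x (hasDerivAt_neg x)).congr_deriv (by simp))
    (by fun_prop) (by fun_prop) (p := -p) (q := -q) hw (by linarith)
    (fun x hx => by
      have := hF (-x) ⟨by linarith [hx.2], by linarith [hx.1]⟩
      simp only [Complex.neg_re, neg_neg]
      convert this using 2 <;> ring)
    (by simpa using hp)
  simp only [norm_neg] at this
  rw [intervalIntegral.integral_comp_neg (fun x => ‖V x‖ ^ 2),
    intervalIntegral.integral_comp_neg (fun x => ‖r x‖ ^ 2)] at this
  simpa using this

/-! ### The solution on the line and the lower bound -/

/-- The solution `e` of `(P_h - z) e = 0` on the line (in general not periodic) with `e p = 1`. -/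
def lineSol (g : ℝ → ℂ) (h : ℝ) (z : ℂ) (p x : ℝ) : ℂ :=
  Complex.exp (-(Complex.I / h) * ∫ y in p..x, (g y - z))

theorem lineSol_hasDerivAt {g : ℝ → ℂ} (hg : Continuous g) (h : ℝ) (z : ℂ) (p x : ℝ) :
    HasDerivAt (lineSol g h z p) (-(Complex.I / h) * (g x - z) * lineSol g h z p x) x := by
  have h1 : HasDerivAt (fun x => ∫ y in p..x, (g y - z)) (g x - z) x :=
    intervalIntegral.integral_hasDerivAt_right (Continuous.intervalIntegrable (by fun_prop) _ _)
      (Continuous.stronglyMeasurableAtFilter (by fun_prop) _ _)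
      (Continuous.continuousAt (by fun_prop))
  exact (h1.const_mul (-(Complex.I / h))).cexp.congr_deriv (by rw [lineSol]; ring)

theorem lineSol_contDiff {g : ℝ → ℂ} (hg : ContDiff ℝ (⊤ : ℕ∞) g) (h : ℝ) (z : ℂ) (p : ℝ) :
    ContDiff ℝ (⊤ : ℕ∞) (lineSol g h z p) := by
  have h1 : ∀ x, HasDerivAt (fun x => ∫ y in p..x, (g y - z)) (g x - z) x := fun x =>
    have := hg.continuous
    intervalIntegral.integral_hasDerivAt_right (Continuous.intervalIntegrable (by fun_prop) _ _)
      (Continuous.stronglyMeasurableAtFilter (by fun_prop) _ _)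
      (Continuous.continuousAt (by fun_prop))
  have h2 : ContDiff ℝ (⊤ : ℕ∞) (fun x => ∫ y in p..x, (g y - z)) := by
    rw [contDiff_infty_iff_deriv]
    refine ⟨fun x => (h1 x).differentiableAt, ?_⟩
    rw [show deriv (fun x => ∫ y in p..x, (g y - z)) = fun x => g x - z from
      funext fun x => (h1 x).deriv]
    exact hg.sub contDiff_const
  exact (contDiff_const.mul h2).cexp

/-- The modulus of the solution is `exp (-Φ / h)`, where the phase `Φ` is the primitive of
`Im z - Im g` vanishing at `p`. -/
theorem lineSol_norm {g : ℝ → ℂ} (hg : Continuous g) (h : ℝ) (z : ℂ) (p x : ℝ) :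
    ‖lineSol g h z p x‖ = Real.exp (-(∫ y in p..x, (z.im - (g y).im)) / h) := by
  rw [lineSol, Complex.norm_exp]
  congr 1
  have h1 : (∫ y in p..x, (z.im - (g y).im)) = -(∫ y in p..x, (g y - z)).im := by
    have := Complex.imCLM.intervalIntegral_comp_comm (a := p) (b := x) (μ := volume)
      (f := fun y => g y - z) (Continuous.intervalIntegrable (by fun_prop) _ _)
    simp only [Complex.imCLM_apply, Complex.sub_im] at this
    rw [← this, ← intervalIntegral.integral_neg]
    congr 1; ext y; ring
  have h2 : Complex.I / (h : ℂ) = ((1 / h : ℝ) : ℂ) * Complex.I := by push_cast; ring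
  rw [h1, h2]
  simp [Complex.mul_re, Complex.mul_im]
  ring

theorem normL2_sq (u : ℝ → ℂ) : normL2 u ^ 2 = ∫ x in (0:ℝ)..(2 * Real.pi), ‖u x‖ ^ 2 :=
  Real.sq_sqrt (intervalIntegral.integral_nonneg Real.two_pi_pos.le fun _ _ => by positivity)

theorem normL2_sq_shift {u : ℝ → ℂ} (hu : ∀ x, u (x + 2 * Real.pi) = u x) (q : ℝ) :
    normL2 u ^ 2 = ∫ x in (q - 2 * Real.pi)..q, ‖u x‖ ^ 2 := by
  have hp : Function.Periodic (fun x => ‖u x‖ ^ 2) (2 * Real.pi) := fun x => by simp [hu]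
  have := hp.intervalIntegral_add_eq 0 (q - 2 * Real.pi)
  rw [normL2_sq]
  simpa using this

theorem deriv_periodic {u : ℝ → ℂ} (hu : ∀ x, u (x + 2 * Real.pi) = u x) (x : ℝ) :
    deriv u (x + 2 * Real.pi) = deriv u x := by
  have : (fun y => u (y + 2 * Real.pi)) = u := funext hu
  rw [← deriv_comp_add_const, this]

theorem PhOp_periodic {g u : ℝ → ℂ} (hper : ∀ x, g (x + 2 * Real.pi) = g x)
    (hu : ∀ x, u (x + 2 * Real.pi) = u x) (h : ℝ) (z : ℂ) (x : ℝ) :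
    PhOp g h u (x + 2 * Real.pi) - z * u (x + 2 * Real.pi) = PhOp g h u x - z * u x := by
  simp only [PhOp, deriv_periodic hu, hper, hu]

theorem PhOp_continuous {g u : ℝ → ℂ} (hg : Continuous g) (hu : ContDiff ℝ (⊤ : ℕ∞) u)
    (h : ℝ) (z : ℂ) : Continuous fun x => PhOp g h u x - z * u x := by
  have h1 := hu.continuous
  have h2 : Continuous (deriv u) := (contDiff_infty_iff_deriv.1 hu).2.continuous
  unfold PhOp
  fun_prop

/-- The `L²` lower bound for `P_h - z` on the orthogonal complement of one function `v`, the
periodization of the solution `e` from `(q - 2π, q]`. For `u ⟂ v`, the function `V = u - u(p) e`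
vanishes at `p` and has norm at least that of `u`; it solves `V' = A V + r` with
`r = (i / h) (P_h - z) u`, and `Re A = (Im g - Im z) / h` has the sign making the equation stable
when it is integrated away from `p` in either direction. -/
theorem lower_bound {g : ℝ → ℂ} (hg : Continuous g) (hper : ∀ x, g (x + 2 * Real.pi) = g x)
    {h κ w p q : ℝ} {z : ℂ} (hh : 0 < h) (hκ : 0 < κ) (hw : 0 < w) (hκw : κ * w ^ 2 = h)
    (hpq : 2 * w ≤ q - p) (hpq' : 2 * w ≤ p - (q - 2 * Real.pi))
    (hR : ∀ y ∈ Icc p q, κ * min (y - p) (q - y) ≤ z.im - (g y).im)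
    (hL : ∀ y ∈ Icc (q - 2 * Real.pi) p,
      κ * min (p - y) (y - (q - 2 * Real.pi)) ≤ (g y).im - z.im) :
    ∃ v : ℝ → ℂ, ∀ u : ℝ → ℂ, ContDiff ℝ (⊤ : ℕ∞) u → (∀ x, u (x + 2 * Real.pi) = u x) →
      normL2 u = 1 → (∫ x in (0:ℝ)..(2 * Real.pi), u x * (starRingEnd ℂ) (v x)) = 0 →
      κ * h / 16 ≤ normL2 (fun x => PhOp g h u x - z * u x) ^ 2 := by
  set e := lineSol g h z p with he
  have hed := lineSol_hasDerivAt hg h z p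
  have hec : Continuous e := continuous_iff_continuousAt.2 fun x => (hed x).continuousAt
  -- the jump of `v` at `q` is harmless, since `v` is only integrated
  refine ⟨fun x => e (toIocMod Real.two_pi_pos (q - 2 * Real.pi) x), ?_⟩
  intro u hu hup hu1 huv
  have huc := hu.continuous
  have hud : ∀ x, HasDerivAt u (deriv u x) x :=
    fun x => ((contDiff_infty_iff_deriv.1 hu).1 x).hasDerivAt
  have horth : (∫ x in (q - 2 * Real.pi)..q, u x * (starRingEnd ℂ) (e x)) = 0 := by
    have hp : Function.Periodic (fun x => u x * (starRingEnd ℂ)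
        (e (toIocMod Real.two_pi_pos (q - 2 * Real.pi) x))) (2 * Real.pi) := fun x => by
      simp only [hup, toIocMod_add_right]
    have := hp.intervalIntegral_add_eq 0 (q - 2 * Real.pi)
    rw [zero_add, huv, sub_add_cancel] at this
    rw [this]
    refine intervalIntegral.integral_congr_ae (Filter.Eventually.of_forall fun x hx => ?_)
    rw [uIoc_of_le (by linarith [Real.two_pi_pos])] at hx
    have hmod : toIocMod Real.two_pi_pos (q - 2 * Real.pi) x = x :=
      (toIocMod_eq_self Real.two_pi_pos).2 (by simpa using hx)
    rw [hmod]
  set r : ℝ → ℂ := fun x => (Complex.I / h) * (PhOp g h u x - z * u x) with hr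
  set A : ℝ → ℂ := fun x => -(Complex.I / h) * (g x - z) with hA
  set V : ℝ → ℂ := fun x => u x - u p * e x with hV
  have hhC : (h : ℂ) ≠ 0 := by exact_mod_cast hh.ne'
  have hVd : ∀ x, HasDerivAt V (A x * V x + r x) x := by
    intro x
    refine ((hud x).sub ((hed x).const_mul (u p))).congr_deriv ?_
    simp only [hA, hV, hr, PhOp, he]
    field_simp
    ring
  have hAc : Continuous A := by fun_prop
  have hPc := PhOp_continuous hg hu h z
  have hrc : Continuous r := by fun_prop
  have hVc : Continuous V := by fun_prop
  have hVp : V p = 0 := by simp [hV, he, lineSol]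
  have hAre : ∀ x, (A x).re = ((g x).im - z.im) / h := by
    intro x
    have h2 : Complex.I / (h : ℂ) = ((1 / h : ℝ) : ℂ) * Complex.I := by push_cast; ring
    simp only [hA, h2]
    simp [Complex.mul_re, Complex.mul_im]
    ring
  have hw2 : w ^ 2 / h = 1 / κ := by rw [← hκw]; field_simp
  have E1 := energy_right hVd hAc hrc hw hpq (fun x hx => by
    have e1 : w ^ 2 * (-(A x).re) = (w ^ 2 / h) * (z.im - (g x).im) := by rw [hAre]; ring
    rw [e1, hw2, one_div, inv_mul_eq_div, le_div_iff₀ hκ, mul_comm]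
    exact hR x hx) hVp
  have E2 := energy_left hVd hAc hrc hw hpq' (fun x hx => by
    have e1 : w ^ 2 * (A x).re = (w ^ 2 / h) * ((g x).im - z.im) := by rw [hAre]; ring
    rw [e1, hw2, one_div, inv_mul_eq_div, le_div_iff₀ hκ, mul_comm]
    exact hL x hx) hVp
  have hVi : ∀ c d, IntervalIntegrable (fun x => ‖V x‖ ^ 2) volume c d :=
    fun c d => Continuous.intervalIntegrable (by fun_prop) _ _
  have hri : ∀ c d, IntervalIntegrable (fun x => ‖r x‖ ^ 2) volume c d :=
    fun c d => Continuous.intervalIntegrable (by fun_prop) _ _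
  have E : (∫ x in (q - 2 * Real.pi)..q, ‖V x‖ ^ 2)
      ≤ 16 * w ^ 2 * ∫ x in (q - 2 * Real.pi)..q, ‖r x‖ ^ 2 := by
    rw [← intervalIntegral.integral_add_adjacent_intervals (hVi _ p) (hVi _ q),
      ← intervalIntegral.integral_add_adjacent_intervals (hri _ p) (hri _ q)]
    linarith
  have hrr : (∫ x in (q - 2 * Real.pi)..q, ‖r x‖ ^ 2)
      = normL2 (fun x => PhOp g h u x - z * u x) ^ 2 / h ^ 2 := by
    rw [normL2_sq_shift (PhOp_periodic hper hup h z) q, ← intervalIntegral.integral_div]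
    congr 1; ext x
    simp only [hr, norm_mul, norm_div, Complex.norm_I, Complex.norm_real, Real.norm_eq_abs,
      abs_of_pos hh]
    ring
  -- Pythagoras: `u` is orthogonal to `e`, so passing from `u` to `V` does not decrease the norm.
  have hpyth : 1 ≤ ∫ x in (q - 2 * Real.pi)..q, ‖V x‖ ^ 2 := by
    have e1 : ∀ x, ‖V x‖ ^ 2 = ‖u x‖ ^ 2 + ‖u p * e x‖ ^ 2 -
        2 * ((starRingEnd ℂ) (u p) * (u x * (starRingEnd ℂ) (e x))).re := by
      intro x
      simp only [hV, ← Complex.normSq_eq_norm_sq, Complex.normSq_sub, map_mul]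
      ring_nf
    have e2 : (∫ x in (q - 2 * Real.pi)..q,
        ((starRingEnd ℂ) (u p) * (u x * (starRingEnd ℂ) (e x))).re) = 0 := by
      have := Complex.reCLM.intervalIntegral_comp_comm (a := q - 2 * Real.pi) (b := q)
        (μ := volume) (f := fun x => (starRingEnd ℂ) (u p) * (u x * (starRingEnd ℂ) (e x)))
        (Continuous.intervalIntegrable
          (continuous_const.mul (huc.mul (Complex.continuous_conj.comp hec))) _ _)
      simp only [Complex.reCLM_apply] at this
      rw [this, intervalIntegral.integral_const_mul, horth]
      simp
    have hcre : Continuous fun x =>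
        2 * ((starRingEnd ℂ) (u p) * (u x * (starRingEnd ℂ) (e x))).re :=
      continuous_const.mul (Complex.continuous_re.comp
        (continuous_const.mul (huc.mul (Complex.continuous_conj.comp hec))))
    simp_rw [e1]
    rw [intervalIntegral.integral_sub (Continuous.intervalIntegrable (by fun_prop) _ _)
      (hcre.intervalIntegrable _ _),
      intervalIntegral.integral_add (Continuous.intervalIntegrable (by fun_prop) _ _)
      (Continuous.intervalIntegrable (by fun_prop) _ _), intervalIntegral.integral_const_mul, e2,
      ← normL2_sq_shift hup q, hu1]
    have : 0 ≤ ∫ x in (q - 2 * Real.pi)..q, ‖u p * e x‖ ^ 2 :=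
      intervalIntegral.integral_nonneg (by linarith [Real.two_pi_pos]) fun _ _ => by positivity
    linarith
  rw [hrr] at E
  have e3 : 16 * w ^ 2 * (normL2 (fun x => PhOp g h u x - z * u x) ^ 2 / h ^ 2)
      = 16 * normL2 (fun x => PhOp g h u x - z * u x) ^ 2 / (κ * h) := by
    have : w ^ 2 = h / κ := by rw [← hκw]; field_simp
    rw [this]; field_simp
  rw [e3] at E
  have := hpyth.trans E
  rw [le_div_iff₀ (by positivity)] at this
  linarith

/-! ### The quasimode and the upper bound -/

theorem smoothTransition_deriv_bound : ∃ K : ℝ, 0 < K ∧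
    (∀ y, |deriv Real.smoothTransition y| ≤ K) ∧
    ∀ y, 1 ≤ y → deriv Real.smoothTransition y = 0 := by
  have h1 : ∀ y, 1 ≤ y → deriv Real.smoothTransition y = 0 := by
    intro y hy
    have : IsLocalMax Real.smoothTransition y := Filter.Eventually.of_forall fun x => by
      rw [Real.smoothTransition.one_of_one_le hy]; exact Real.smoothTransition.le_one x
    exact this.deriv_eq_zero
  have h0 : ∀ y, y ≤ 0 → deriv Real.smoothTransition y = 0 := by
    intro y hy
    have : IsLocalMin Real.smoothTransition y := Filter.Eventually.of_forall fun x => by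
      rw [Real.smoothTransition.zero_of_nonpos hy]; exact Real.smoothTransition.nonneg x
    exact this.deriv_eq_zero
  have hc : Continuous (deriv Real.smoothTransition) :=
    (contDiff_infty_iff_deriv.1 (Real.smoothTransition.contDiff (n := ⊤))).2.continuous
  obtain ⟨B, hB⟩ := (isCompact_Icc (a := (0:ℝ)) (b := 1)).exists_bound_of_continuousOn
    hc.continuousOn
  refine ⟨|B| + 1, by positivity, ?_, h1⟩
  intro y
  rcases le_total y 0 with h | h
  · rw [h0 y h, abs_zero]; positivity
  rcases le_total 1 y with h' | h'
  · rw [h1 y h', abs_zero]; positivity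
  · have := hB y ⟨h, h'⟩
    rw [Real.norm_eq_abs] at this
    linarith [le_abs_self B]

/-- The `2π`-periodic function agreeing with `ψ` on `(α, α + 2π]`. -/
def periodize (α : ℝ) (ψ : ℝ → ℂ) (x : ℝ) : ℂ := ψ (toIocMod Real.two_pi_pos α x)

theorem periodize_add (α : ℝ) (ψ : ℝ → ℂ) (x : ℝ) :
    periodize α ψ (x + 2 * Real.pi) = periodize α ψ x := by
  simp only [periodize, toIocMod_add_right]

theorem periodize_of_mem {α x : ℝ} (ψ : ℝ → ℂ) (hx : x ∈ Ioc α (α + 2 * Real.pi)) :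
    periodize α ψ x = ψ x := by
  simp only [periodize, (toIocMod_eq_self Real.two_pi_pos).2 hx]

/-- Near every point of the period, both endpoints included, the periodization of a function
vanishing near the ends of the period agrees with that function. -/
theorem periodize_eventuallyEq {α δ : ℝ} {ψ : ℝ → ℂ} (hδ : 0 < δ) (hδ' : δ ≤ Real.pi)
    (h0 : ∀ x, x ≤ α + δ → ψ x = 0) (h1 : ∀ x, α + 2 * Real.pi - δ ≤ x → ψ x = 0)
    {x : ℝ} (hx : x ∈ Ioc α (α + 2 * Real.pi)) : periodize α ψ =ᶠ[nhds x] ψ := by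
  filter_upwards [Ioo_mem_nhds (by linarith : x - δ < x) (by linarith : x < x + δ)] with y hy
  rcases le_or_gt y α with h | h
  · rw [← periodize_add, periodize_of_mem ψ ⟨by linarith [hy.1, hx.1], by linarith⟩,
      h0 y (by linarith), h1 _ (by linarith [hy.1, hx.1])]
  rcases le_or_gt y (α + 2 * Real.pi) with h' | h'
  · exact periodize_of_mem ψ ⟨h, h'⟩
  · have := periodize_add α ψ (y - 2 * Real.pi)
    rw [sub_add_cancel] at this
    rw [this, periodize_of_mem ψ ⟨by linarith, by linarith [hy.2, hx.2]⟩,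
      h1 y (by linarith), h0 _ (by linarith [hy.2, hx.2])]

theorem periodize_contDiff {α δ : ℝ} {ψ : ℝ → ℂ} (hψ : ContDiff ℝ (⊤ : ℕ∞) ψ)
    (hδ : 0 < δ) (hδ' : δ ≤ Real.pi)
    (h0 : ∀ x, x ≤ α + δ → ψ x = 0) (h1 : ∀ x, α + 2 * Real.pi - δ ≤ x → ψ x = 0) :
    ContDiff ℝ (⊤ : ℕ∞) (periodize α ψ) := by
  rw [contDiff_iff_contDiffAt]
  intro x
  set n := toIocDiv Real.two_pi_pos α x
  have hy : x - n • (2 * Real.pi) ∈ Ioc α (α + 2 * Real.pi) :=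
    sub_toIocDiv_zsmul_mem_Ioc Real.two_pi_pos α x
  have h2 : ContDiffAt ℝ (⊤ : ℕ∞) (periodize α ψ) (x - n • (2 * Real.pi)) :=
    hψ.contDiffAt.congr_of_eventuallyEq (periodize_eventuallyEq hδ hδ' h0 h1 hy)
  have h3 : periodize α ψ = (periodize α ψ) ∘ fun x => x - n • (2 * Real.pi) := by
    ext y
    have hp : Function.Periodic (periodize α ψ) (2 * Real.pi) := periodize_add α ψ
    exact (hp.sub_zsmul_eq n).symm
  rw [h3]
  exact h2.comp x (contDiff_id.sub contDiff_const).contDiffAt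

/-- Rayleigh quotient bound: a test function need not be normalized. -/
theorem t0sq_le_ratio {g u : ℝ → ℂ} {h : ℝ} {z : ℂ} {X Y : ℝ} (hu : ContDiff ℝ (⊤ : ℕ∞) u)
    (hup : ∀ x, u (x + 2 * Real.pi) = u x) (hX : 0 < X) (hXu : X ≤ normL2 u ^ 2)
    (hY : normL2 (fun x => PhOp g h u x - z * u x) ^ 2 ≤ Y) : t0sq g h z ≤ Y / X := by
  have hN : 0 < normL2 u := by
    have h0 : 0 ≤ normL2 u := Real.sqrt_nonneg _
    rcases h0.eq_or_lt with h | h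
    · rw [← h] at hXu; norm_num at hXu; linarith
    · exact h
  set N := normL2 u with hNdef
  have hNC : ‖((N⁻¹ : ℝ) : ℂ)‖ ^ 2 = (N ^ 2)⁻¹ := by
    rw [Complex.norm_real, Real.norm_eq_abs, sq_abs, inv_pow]
  have hsc : ∀ f : ℝ → ℂ, normL2 (fun x => ((N⁻¹ : ℝ) : ℂ) * f x) ^ 2 = normL2 f ^ 2 / N ^ 2 := by
    intro f
    rw [normL2_sq, normL2_sq, div_eq_inv_mul, ← intervalIntegral.integral_const_mul]
    congr 1; ext x
    rw [norm_mul, mul_pow, hNC]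
  have hP : (fun x => PhOp g h (fun x => ((N⁻¹ : ℝ) : ℂ) * u x) x - z * (((N⁻¹ : ℝ) : ℂ) * u x))
      = fun x => ((N⁻¹ : ℝ) : ℂ) * (PhOp g h u x - z * u x) := by
    ext x
    simp only [PhOp]
    rw [deriv_const_mul_field]
    ring
  have hmem : normL2 (fun x => PhOp g h u x - z * u x) ^ 2 / N ^ 2 ∈
      {r : ℝ | ∃ u : ℝ → ℂ, ContDiff ℝ (⊤ : ℕ∞) u ∧ (∀ x, u (x + 2 * Real.pi) = u x) ∧
        normL2 u = 1 ∧ r = (normL2 (fun x => PhOp g h u x - z * u x)) ^ 2} := by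
    refine ⟨fun x => ((N⁻¹ : ℝ) : ℂ) * u x, contDiff_const.mul hu, fun x => by simp only [hup],
      ?_, ?_⟩
    · have h1 := hsc u
      rw [← hNdef, div_self (by positivity)] at h1
      have h0 : 0 ≤ normL2 (fun x => ((N⁻¹ : ℝ) : ℂ) * u x) := Real.sqrt_nonneg _
      nlinarith
    · rw [hP, hsc]
  have hbdd : BddBelow {r : ℝ | ∃ u : ℝ → ℂ, ContDiff ℝ (⊤ : ℕ∞) u ∧
      (∀ x, u (x + 2 * Real.pi) = u x) ∧
        normL2 u = 1 ∧ r = (normL2 (fun x => PhOp g h u x - z * u x)) ^ 2} := by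
    refine ⟨0, ?_⟩
    rintro r ⟨u, -, -, -, rfl⟩
    positivity
  refine (csInf_le hbdd hmem).trans ?_
  exact div_le_div₀ ((sq_nonneg _).trans hY) hY hX hXu

/-- The quasimode bound. The test function is the periodization of `χ e`, with `e` the solution on
the line and `χ` a cutoff vanishing near `q - 2π` and `q` and equal to `1` at distance `≥ w` from
them. There `(P_h - z)(χ e) = (h / i) χ' e`, with `|χ'| ≲ 1 / w` on a set of length `2 w` where
`‖e‖ ^ 2 ≲ exp (-2 S / h)`, while `‖χ e‖ ^ 2 ≳ w` because `|e|` is of order one near `p`. -/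
theorem upper_bound {K : ℝ} (hKst : ∀ y, |deriv Real.smoothTransition y| ≤ K)
    (hst1 : ∀ y, 1 ≤ y → deriv Real.smoothTransition y = 0)
    {g : ℝ → ℂ} (hg : ContDiff ℝ (⊤ : ℕ∞) g) (hper : ∀ x, g (x + 2 * Real.pi) = g x)
    {h w L S p q : ℝ} {z : ℂ} (hh : 0 < h) (hw : 0 < w) (hL : 0 ≤ L)
    (hpq : 2 * w ≤ q - p) (hpq' : 2 * w ≤ p - (q - 2 * Real.pi))
    (hp : (g p).im = z.im) (hq : (g q).im = z.im)
    (hlip : ∀ x y, (g x).im = z.im → |y - x| ≤ w → |z.im - (g y).im| ≤ L * |y - x|)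
    (hS1 : S ≤ ∫ y in p..q, (z.im - (g y).im))
    (hS2 : S ≤ ∫ y in p..(q - 2 * Real.pi), (z.im - (g y).im)) :
    t0sq g h z ≤ 32 * K ^ 2 * Real.exp (4 * (L * w ^ 2 / h)) * (h ^ 2 / w ^ 2) *
      Real.exp (-(2 * S) / h) := by
  have hgc := hg.continuous
  have h2pi := Real.two_pi_pos
  set α := q - 2 * Real.pi with hα
  have hαq : α + 2 * Real.pi = q := by rw [hα]; ring
  set e := lineSol g h z p with he
  have hed := lineSol_hasDerivAt hgc h z p
  have hen := lineSol_norm hgc h z p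
  have hes := lineSol_contDiff hg h z p
  set st := Real.smoothTransition with hst
  have hstd : ∀ y, HasDerivAt st (deriv st y) y := fun y =>
    ((contDiff_infty_iff_deriv.1 (Real.smoothTransition.contDiff (n := ⊤))).1 y).hasDerivAt
  set χ : ℝ → ℝ := fun x => st (2 * (q - x) / w - 1) * st (2 * (x - α) / w - 1) with hχ
  set χ' : ℝ → ℝ := fun x =>
    deriv st (2 * (q - x) / w - 1) * (-2 / w) * st (2 * (x - α) / w - 1) +
    st (2 * (q - x) / w - 1) * (deriv st (2 * (x - α) / w - 1) * (2 / w)) with hχ'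
  have hχd : ∀ x, HasDerivAt χ (χ' x) x := by
    intro x
    have h1 : HasDerivAt (fun x => 2 * (q - x) / w - 1) (-2 / w) x :=
      (((((hasDerivAt_id x).const_sub q).const_mul 2).div_const w).sub_const 1).congr_deriv
        (by ring)
    have h2 : HasDerivAt (fun x => 2 * (x - α) / w - 1) (2 / w) x :=
      (((((hasDerivAt_id x).sub_const α).const_mul 2).div_const w).sub_const 1).congr_deriv
        (by ring)
    exact ((hstd _).comp x h1).mul ((hstd _).comp x h2)
  have hχs : ContDiff ℝ (⊤ : ℕ∞) χ := by
    have hs : ContDiff ℝ (⊤ : ℕ∞) st := Real.smoothTransition.contDiff (n := ⊤)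
    refine ContDiff.mul (hs.comp ?_) (hs.comp ?_) <;> fun_prop
  have hst_abs : ∀ y, |st y| ≤ 1 := fun y => by
    rw [abs_of_nonneg (Real.smoothTransition.nonneg y)]; exact Real.smoothTransition.le_one y
  have hK0 : 0 ≤ K := (abs_nonneg _).trans (hKst 0)
  have hχ'b : ∀ x, |χ' x| ≤ 4 * K / w := by
    intro x
    have e1 : |deriv st (2 * (q - x) / w - 1) * (-2 / w) * st (2 * (x - α) / w - 1)|
        ≤ K * (2 / w) * 1 := by
      rw [abs_mul, abs_mul, abs_div, abs_of_pos hw, abs_neg, abs_two]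
      gcongr
      · exact hKst _
      · exact hst_abs _
    have e2 : |st (2 * (q - x) / w - 1) * (deriv st (2 * (x - α) / w - 1) * (2 / w))|
        ≤ 1 * (K * (2 / w)) := by
      rw [abs_mul, abs_mul, abs_div, abs_of_pos hw, abs_two]
      gcongr
      · exact hst_abs _
      · exact hKst _
    calc _ ≤ _ := abs_add_le _ _
      _ ≤ K * (2 / w) * 1 + 1 * (K * (2 / w)) := add_le_add e1 e2
      _ = _ := by ring
  have harg : ∀ l : ℝ, w ≤ l → 1 ≤ 2 * l / w - 1 := by
    intro l hl
    have : 2 ≤ 2 * l / w := by rw [le_div_iff₀ hw]; linarith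
    linarith
  have harg0 : ∀ l : ℝ, l ≤ w / 2 → 2 * l / w - 1 ≤ 0 := by
    intro l hl
    have : 2 * l / w ≤ 1 := by rw [div_le_iff₀ hw]; linarith
    linarith
  have hχ'0 : ∀ x ∈ Icc (α + w) (q - w), χ' x = 0 := by
    intro x hx
    simp only [hχ', hst1 _ (harg (q - x) (by linarith [hx.2])),
      hst1 _ (harg (x - α) (by linarith [hx.1]))]
    ring
  have hχ1 : ∀ x ∈ Icc (α + w) (q - w), χ x = 1 := by
    intro x hx
    simp only [hχ, hst, Real.smoothTransition.one_of_one_le (harg (q - x) (by linarith [hx.2])),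
      Real.smoothTransition.one_of_one_le (harg (x - α) (by linarith [hx.1])), mul_one]
  set ψ : ℝ → ℂ := fun x => (χ x : ℂ) * e x with hψ
  have hψs : ContDiff ℝ (⊤ : ℕ∞) ψ := (Complex.ofRealCLM.contDiff.comp hχs).mul hes
  have hψ0 : ∀ x, x ≤ α + w / 2 → ψ x = 0 := by
    intro x hx
    simp only [hψ, hχ, hst, Real.smoothTransition.zero_of_nonpos (harg0 (x - α) (by linarith)),
      mul_zero, Complex.ofReal_zero, zero_mul]
  have hψ1 : ∀ x, α + 2 * Real.pi - w / 2 ≤ x → ψ x = 0 := by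
    intro x hx
    simp only [hψ, hχ, hst, Real.smoothTransition.zero_of_nonpos (harg0 (q - x) (by linarith)),
      zero_mul, Complex.ofReal_zero]
  have hwpi : w / 2 ≤ Real.pi := by linarith
  have hw2 : 0 < w / 2 := by linarith
  set u := periodize α ψ with hu
  have hus : ContDiff ℝ (⊤ : ℕ∞) u := periodize_contDiff hψs hw2 hwpi hψ0 hψ1
  have hup : ∀ x, u (x + 2 * Real.pi) = u x := periodize_add α ψ
  have hhC : (h : ℂ) ≠ 0 := by exact_mod_cast hh.ne'
  have hψd : ∀ x, HasDerivAt ψ ((χ' x : ℂ) * e x + (χ x : ℂ) *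
      (-(Complex.I / h) * (g x - z) * e x)) x := fun x => ((hχd x).ofReal_comp).mul (hed x)
  have hPu : ∀ x ∈ Ioc α q, ‖PhOp g h u x - z * u x‖ ^ 2 = h ^ 2 * (χ' x ^ 2 * ‖e x‖ ^ 2) := by
    intro x hx
    have hev := periodize_eventuallyEq hw2 hwpi hψ0 hψ1 (x := x) (by rwa [hαq])
    have e1 : PhOp g h u x - z * u x = (h / Complex.I) * ((χ' x : ℂ) * e x) := by
      simp only [PhOp, hu]
      rw [hev.deriv_eq, hev.eq_of_nhds, (hψd x).deriv]
      simp only [hψ]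
      field_simp
      ring
    rw [e1, norm_mul, norm_div, norm_mul, Complex.norm_I, Complex.norm_real, Complex.norm_real,
      Real.norm_eq_abs, Real.norm_eq_abs, mul_pow, mul_pow, div_one, sq_abs, sq_abs]
  -- near each of the three turning points the phase varies by at most `L w²`
  have hphase : ∀ x y, (g x).im = z.im → |y - x| ≤ w →
      |∫ s in x..y, (z.im - (g s).im)| ≤ L * w ^ 2 := by
    intro x y hx hy
    have := intervalIntegral.norm_integral_le_of_norm_le_const (a := x) (b := y) (C := L * w)
      (f := fun s => z.im - (g s).im) (fun s hs => by
        have h1 : |s - x| ≤ |y - x| := abs_sub_left_of_mem_uIcc (uIoc_subset_uIcc hs)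
        refine (hlip x s hx (h1.trans hy)).trans ?_
        gcongr
        exact h1.trans hy)
    calc _ ≤ L * w * |y - x| := this
      _ ≤ L * w * w := by gcongr
      _ = _ := by ring
  have hInt : ∀ c d, IntervalIntegrable (fun s => z.im - (g s).im) volume c d := fun c d =>
    (continuous_const.sub (Complex.continuous_im.comp hgc)).intervalIntegrable c d
  have hesq : ∀ x, ‖e x‖ ^ 2 = Real.exp (-(2 * ∫ y in p..x, (z.im - (g y).im)) / h) := by
    intro x
    rw [hen, ← Real.exp_nat_mul]
    congr 1
    push_cast; ring
  set B := Real.exp (-(2 * S) / h) * Real.exp (2 * (L * w ^ 2 / h)) with hB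
  have hend : ∀ x y, (g x).im = z.im → S ≤ (∫ s in p..x, (z.im - (g s).im)) → |y - x| ≤ w →
      ‖e y‖ ^ 2 ≤ B := by
    intro x y hx hSx hy
    rw [hesq, hB, ← Real.exp_add]
    apply Real.exp_le_exp.2
    have e1 := intervalIntegral.integral_add_adjacent_intervals (hInt p x) (hInt x y)
    have e2 := (abs_le.1 (hphase x y hx hy)).1
    have e3 : -(2 * S) / h + 2 * (L * w ^ 2 / h) = (-(2 * S) + 2 * (L * w ^ 2)) / h := by ring
    rw [e3]
    gcongr
    linarith
  have hgα : (g α).im = z.im := by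
    have := hper α
    rw [hαq] at this
    rw [← this, hq]
  have hB0 : 0 ≤ B := by positivity
  have hnum : normL2 (fun x => PhOp g h u x - z * u x) ^ 2
      ≤ 32 * K ^ 2 * (h ^ 2 / w) * B := by
    rw [normL2_sq_shift (PhOp_periodic hper hup h z) q]
    have hPc : Continuous fun x => ‖PhOp g h u x - z * u x‖ ^ 2 :=
      (PhOp_continuous hgc hus h z).norm.pow 2
    have hPi : ∀ c d, IntervalIntegrable (fun x => ‖PhOp g h u x - z * u x‖ ^ 2) volume c d :=
      fun c d => hPc.intervalIntegrable c d
    rw [← hα, ← intervalIntegral.integral_add_adjacent_intervals (hPi α (α + w)) (hPi _ q),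
      ← intervalIntegral.integral_add_adjacent_intervals (hPi (α + w) (q - w)) (hPi _ q)]
    have hpt : ∀ x ∈ Ioc α q, ‖e x‖ ^ 2 ≤ B →
        ‖‖PhOp g h u x - z * u x‖ ^ 2‖ ≤ h ^ 2 * ((4 * K / w) ^ 2 * B) := by
      intro x hx hxB
      rw [Real.norm_of_nonneg (by positivity), hPu x hx]
      have : χ' x ^ 2 ≤ (4 * K / w) ^ 2 := by
        rw [← sq_abs (χ' x)]
        exact pow_le_pow_left₀ (abs_nonneg _) (hχ'b x) 2
      gcongr
    have I1 := intervalIntegral.norm_integral_le_of_norm_le_const (a := α) (b := α + w)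
      (C := h ^ 2 * ((4 * K / w) ^ 2 * B)) (f := fun x => ‖PhOp g h u x - z * u x‖ ^ 2)
      (fun x hx => by
        rw [uIoc_of_le (by linarith)] at hx
        exact hpt x ⟨hx.1, by linarith [hx.2]⟩ (hend α x hgα hS2
          (by rw [abs_of_nonneg (by linarith [hx.1])]; linarith [hx.2])))
    have I3 := intervalIntegral.norm_integral_le_of_norm_le_const (a := q - w) (b := q)
      (C := h ^ 2 * ((4 * K / w) ^ 2 * B)) (f := fun x => ‖PhOp g h u x - z * u x‖ ^ 2)
      (fun x hx => by
        rw [uIoc_of_le (by linarith)] at hx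
        exact hpt x ⟨by linarith [hx.1], hx.2⟩ (hend q x hq hS1
          (by rw [abs_of_nonpos (by linarith [hx.2])]; linarith [hx.1])))
    have I2 : (∫ x in (α + w)..(q - w), ‖PhOp g h u x - z * u x‖ ^ 2) = 0 := by
      rw [intervalIntegral.integral_congr (g := fun _ => (0:ℝ)), intervalIntegral.integral_zero]
      intro x hx
      rw [uIcc_of_le (by linarith)] at hx
      simp only
      rw [hPu x ⟨by linarith [hx.1], by linarith [hx.2]⟩, hχ'0 x hx]
      ring
    have J1 := (Real.le_norm_self _).trans I1
    have J3 := (Real.le_norm_self _).trans I3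
    rw [show |α + w - α| = w by rw [add_sub_cancel_left, abs_of_pos hw]] at J1
    rw [show |q - (q - w)| = w by rw [sub_sub_cancel, abs_of_pos hw]] at J3
    have e1 : h ^ 2 * ((4 * K / w) ^ 2 * B) * w = 16 * K ^ 2 * (h ^ 2 / w) * B := by
      field_simp; ring
    rw [e1] at J1 J3
    rw [I2]
    linarith
  have hden : w * Real.exp (-(2 * (L * w ^ 2 / h))) ≤ normL2 u ^ 2 := by
    rw [normL2_sq_shift hup q]
    have huc := hus.continuous
    have hui : ∀ c d, IntervalIntegrable (fun x => ‖u x‖ ^ 2) volume c d :=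
      fun c d => Continuous.intervalIntegrable (by fun_prop) c d
    have h1 : (∫ x in p..(p + w), ‖u x‖ ^ 2) ≤ ∫ x in (q - 2 * Real.pi)..q, ‖u x‖ ^ 2 :=
      intervalIntegral.integral_mono_interval (by linarith) (by linarith) (by linarith)
        (Filter.Eventually.of_forall fun x => by positivity) (hui _ _)
    refine le_trans ?_ h1
    have h2 := intervalIntegral.integral_mono_on (a := p) (b := p + w) (by linarith)
      (intervalIntegrable_const (c := Real.exp (-(2 * (L * w ^ 2 / h))))) (hui p (p + w))
      (fun x hx => by
        have hxα : x ∈ Icc (α + w) (q - w) := ⟨by linarith [hx.1], by linarith [hx.2]⟩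
        have : u x = e x := by
          rw [hu, periodize_of_mem ψ ⟨by linarith [hx.1], by linarith [hx.2]⟩]
          simp only [hψ, hχ1 x hxα, Complex.ofReal_one, one_mul]
        rw [this, hesq]
        apply Real.exp_le_exp.2
        have e2 := (abs_le.1 (hphase p x hp
          (by rw [abs_of_nonneg (by linarith [hx.1])]; linarith [hx.2]))).2
        have e3 : -(2 * (L * w ^ 2 / h)) = -(2 * (L * w ^ 2)) / h := by ring
        rw [e3]
        gcongr)
    simpa using h2
  refine (t0sq_le_ratio hus hup (by positivity) hden hnum).trans (le_of_eq ?_)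
  rw [hB, show 4 * (L * w ^ 2 / h) = 2 * (L * w ^ 2 / h) + 2 * (L * w ^ 2 / h) by ring,
    Real.exp_add, Real.exp_neg]
  field_simp

/-! ### The max-min value `t1sq` -/

/-- Parseval for the two modes `1` and `exp (i x)`. -/
theorem normL2_test (α β : ℂ) :
    normL2 (fun x => α + β * Complex.exp (x * Complex.I)) ^ 2
      = 2 * Real.pi * (‖α‖ ^ 2 + ‖β‖ ^ 2) := by
  have e1 : ∀ x : ℝ, ‖α + β * Complex.exp (x * Complex.I)‖ ^ 2
      = (‖α‖ ^ 2 + ‖β‖ ^ 2) + (2 * (α * (starRingEnd ℂ) β).re * Real.cos x +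
        2 * (α * (starRingEnd ℂ) β).im * Real.sin x) := by
    intro x
    have h1 : Complex.normSq (Complex.exp (x * Complex.I)) = 1 := by
      rw [Complex.normSq_eq_norm_sq, Complex.norm_exp_ofReal_mul_I]; norm_num
    rw [← Complex.normSq_eq_norm_sq, Complex.normSq_add, map_mul, h1, Complex.normSq_eq_norm_sq,
      Complex.normSq_eq_norm_sq, map_mul, ← Complex.exp_conj]
    have h2 : (starRingEnd ℂ) (x * Complex.I) = ((-x : ℝ) : ℂ) * Complex.I := by
      simp
    rw [h2, ← mul_assoc, Complex.mul_re, Complex.exp_ofReal_mul_I_re, Complex.exp_ofReal_mul_I_im,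
      Real.cos_neg, Real.sin_neg]
    ring
  rw [normL2_sq]
  simp_rw [e1]
  generalize ‖α‖ ^ 2 + ‖β‖ ^ 2 = c
  rw [intervalIntegral.integral_add (Continuous.intervalIntegrable (by fun_prop) _ _)
    (Continuous.intervalIntegrable (by fun_prop) _ _),
    intervalIntegral.integral_add (Continuous.intervalIntegrable (by fun_prop) _ _)
    (Continuous.intervalIntegrable (by fun_prop) _ _), intervalIntegral.integral_const_mul,
    intervalIntegral.integral_const_mul, integral_cos, integral_sin]
  simp

/-- Some normalized combination of `1` and `exp (i x)` is orthogonal to a given `v`. No integrability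
of `v` is assumed: where an integral against `v` has no meaning, its value is `0` by convention and
the orthogonality condition is void. -/
theorem exists_orthogonal_test (v : ℝ → ℂ) : ∃ α β : ℂ, ‖α‖ ≤ 1 ∧ ‖β‖ ≤ 1 ∧
    normL2 (fun x => α + β * Complex.exp (x * Complex.I)) = 1 ∧
    (∫ x in (0:ℝ)..(2 * Real.pi),
      (α + β * Complex.exp (x * Complex.I)) * (starRingEnd ℂ) (v x)) = 0 := by
  -- a nonzero solution of the one linear condition, to be normalized afterwards
  obtain ⟨α, β, hne, horth⟩ : ∃ α β : ℂ, 0 < ‖α‖ ^ 2 + ‖β‖ ^ 2 ∧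
      (∫ x in (0:ℝ)..(2 * Real.pi),
        (α + β * Complex.exp (x * Complex.I)) * (starRingEnd ℂ) (v x)) = 0 := by
    set I0 := ∫ x in (0:ℝ)..(2 * Real.pi), (starRingEnd ℂ) (v x) with hI0
    by_cases h0 : I0 = 0
    · refine ⟨1, 0, by norm_num, ?_⟩
      simpa using h0
    · -- a nonzero integral forces integrability of `v`
      have hInt : IntervalIntegrable (fun x => (starRingEnd ℂ) (v x)) volume 0 (2 * Real.pi) := by
        by_contra hn
        exact h0 (intervalIntegral.integral_undef hn)
      have hInt2 : IntervalIntegrable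
          (fun x : ℝ => Complex.exp (x * Complex.I) * (starRingEnd ℂ) (v x)) volume
          0 (2 * Real.pi) := hInt.continuousOn_mul (Continuous.continuousOn (by fun_prop))
      set I1 := ∫ x in (0:ℝ)..(2 * Real.pi),
        Complex.exp (x * Complex.I) * (starRingEnd ℂ) (v x) with hI1
      refine ⟨-I1 / I0, 1, by rw [norm_one]; positivity, ?_⟩
      have : ∀ x : ℝ, (-I1 / I0 + 1 * Complex.exp (x * Complex.I)) * (starRingEnd ℂ) (v x)
          = -I1 / I0 * (starRingEnd ℂ) (v x) +
            Complex.exp (x * Complex.I) * (starRingEnd ℂ) (v x) := fun x => by ring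
      simp_rw [this]
      rw [intervalIntegral.integral_add (hInt.const_mul _) hInt2,
        intervalIntegral.integral_const_mul, ← hI0, ← hI1]
      field_simp
      ring
  set N := Real.sqrt (2 * Real.pi * (‖α‖ ^ 2 + ‖β‖ ^ 2)) with hN
  have h2pi := Real.two_pi_pos
  have hN0 : 0 < N := Real.sqrt_pos.2 (by positivity)
  have hN2 : N ^ 2 = 2 * Real.pi * (‖α‖ ^ 2 + ‖β‖ ^ 2) := Real.sq_sqrt (by positivity)
  have hnorm : ∀ c : ℂ, ‖c / (N : ℂ)‖ = ‖c‖ / N := fun c => by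
    rw [norm_div, Complex.norm_real, Real.norm_of_nonneg hN0.le]
  have hpi : 1 ≤ 2 * Real.pi := by linarith [Real.pi_gt_three]
  have hle : ∀ c : ℂ, ‖c‖ ^ 2 ≤ ‖α‖ ^ 2 + ‖β‖ ^ 2 → ‖c / (N : ℂ)‖ ≤ 1 := by
    intro c hc
    rw [hnorm, div_le_one hN0]
    refine abs_le_of_sq_le_sq' ?_ hN0.le |>.2
    rw [hN2]
    nlinarith
  refine ⟨α / N, β / N, hle α (by linarith [sq_nonneg ‖β‖]), hle β (by linarith [sq_nonneg ‖α‖]),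
    ?_, ?_⟩
  · have h1 := normL2_test (α / N) (β / N)
    rw [hnorm, hnorm, div_pow, div_pow, ← add_div, mul_div_assoc', ← hN2,
      div_self (by positivity)] at h1
    have h0 : 0 ≤ normL2 (fun x : ℝ => α / N + β / N * Complex.exp (x * Complex.I)) :=
      Real.sqrt_nonneg _
    nlinarith
  · have : ∀ x : ℝ, (α / N + β / N * Complex.exp (x * Complex.I)) * (starRingEnd ℂ) (v x)
        = (1 / N : ℂ) * ((α + β * Complex.exp (x * Complex.I)) * (starRingEnd ℂ) (v x)) :=
      fun x => by ring
    simp_rw [this]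
    rw [intervalIntegral.integral_const_mul, horth, mul_zero]

/-- Every constraint set in the definition of `t1sq` contains a test function of energy at most `B`,
with `B` independent of `v`. Hence the infima are over nonempty sets and the supremum is over a
bounded set, so neither takes its conventional value `0`. -/
theorem exists_bounded_test {g : ℝ → ℂ} (hg : Continuous g) (h : ℝ) (z : ℂ) :
    ∃ B : ℝ, ∀ v : ℝ → ℂ, ∃ u : ℝ → ℂ, ContDiff ℝ (⊤ : ℕ∞) u ∧
      (∀ x, u (x + 2 * Real.pi) = u x) ∧ normL2 u = 1 ∧
      (∫ x in (0:ℝ)..(2 * Real.pi), u x * (starRingEnd ℂ) (v x)) = 0 ∧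
      normL2 (fun x => PhOp g h u x - z * u x) ^ 2 ≤ B := by
  obtain ⟨G, hG⟩ := (isCompact_Icc (a := (0:ℝ)) (b := 2 * Real.pi)).exists_bound_of_continuousOn
    hg.continuousOn
  refine ⟨(|h| + (|G| + ‖z‖) * 2) ^ 2 * |2 * Real.pi - 0|, fun v => ?_⟩
  obtain ⟨α, β, hα, hβ, hn, ho⟩ := exists_orthogonal_test v
  have hd : ∀ x : ℝ, HasDerivAt (fun x : ℝ => α + β * Complex.exp (x * Complex.I))
      (β * (Complex.exp (x * Complex.I) * Complex.I)) x := by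
    intro x
    have h1 : HasDerivAt (fun x : ℝ => (x : ℂ) * Complex.I) Complex.I x := by
      simpa using (Complex.ofRealCLM.hasDerivAt (x := x)).mul_const Complex.I
    exact (h1.cexp.const_mul β).const_add α
  have hs : ContDiff ℝ (⊤ : ℕ∞) (fun x : ℝ => α + β * Complex.exp (x * Complex.I)) :=
    contDiff_const.add (contDiff_const.mul
      ((Complex.ofRealCLM.contDiff.mul contDiff_const).cexp))
  refine ⟨_, hs, ?_, hn, ho, ?_⟩
  · intro x
    have : ((x + 2 * Real.pi : ℝ) : ℂ) * Complex.I = x * Complex.I + 2 * Real.pi * Complex.I := by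
      push_cast; ring
    simp only [this, Complex.exp_periodic _]
  · rw [normL2_sq]
    refine (Real.le_norm_self _).trans
      (intervalIntegral.norm_integral_le_of_norm_le_const fun x hx => ?_)
    rw [uIoc_of_le Real.two_pi_pos.le] at hx
    have hgx := (hG x ⟨hx.1.le, hx.2⟩).trans (le_abs_self G)
    rw [Real.norm_of_nonneg (by positivity)]
    refine pow_le_pow_left₀ (norm_nonneg _) ?_ 2
    simp only [PhOp]
    rw [(hd x).deriv]
    have hE := Complex.norm_exp_ofReal_mul_I x
    have e1 : ‖(h : ℂ) / Complex.I * (β * (Complex.exp (x * Complex.I) * Complex.I))‖ ≤ |h| := by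
      rw [norm_mul, norm_mul, norm_mul, norm_div, hE, Complex.norm_I, Complex.norm_real,
        Real.norm_eq_abs, div_one, mul_one, mul_one]
      exact mul_le_of_le_one_right (abs_nonneg _) hβ
    have e2 : ‖α + β * Complex.exp (x * Complex.I)‖ ≤ 2 := by
      refine (norm_add_le _ _).trans ?_
      rw [norm_mul, hE, mul_one]
      linarith
    have e3 : ‖g x * (α + β * Complex.exp (x * Complex.I))‖ ≤ |G| * 2 := by
      rw [norm_mul]; gcongr
    have e4 : ‖z * (α + β * Complex.exp (x * Complex.I))‖ ≤ ‖z‖ * 2 := by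
      rw [norm_mul]; gcongr
    have e5 := norm_sub_le ((h : ℂ) / Complex.I * (β * (Complex.exp (x * Complex.I) * Complex.I))
      + g x * (α + β * Complex.exp (x * Complex.I))) (z * (α + β * Complex.exp (x * Complex.I)))
    have e6 := norm_add_le ((h : ℂ) / Complex.I * (β * (Complex.exp (x * Complex.I) * Complex.I)))
      (g x * (α + β * Complex.exp (x * Complex.I)))
    linarith

/-- A lower bound on the orthogonal complement of a single `v` is a lower bound for `t1sq`. -/
theorem le_t1sq {g : ℝ → ℂ} (hg : Continuous g) {h : ℝ} {z : ℂ} {R : ℝ}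
    (hv : ∃ v : ℝ → ℂ, ∀ u : ℝ → ℂ, ContDiff ℝ (⊤ : ℕ∞) u → (∀ x, u (x + 2 * Real.pi) = u x) →
      normL2 u = 1 → (∫ x in (0:ℝ)..(2 * Real.pi), u x * (starRingEnd ℂ) (v x)) = 0 →
      R ≤ normL2 (fun x => PhOp g h u x - z * u x) ^ 2) : R ≤ t1sq g h z := by
  obtain ⟨B, hB⟩ := exists_bounded_test hg h z
  obtain ⟨v, hv⟩ := hv
  unfold t1sq
  refine le_csSup_of_le ⟨B, ?_⟩ ⟨v, rfl⟩ ?_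
  · rintro r ⟨v', rfl⟩
    obtain ⟨u, h1, h2, h3, h4, h5⟩ := hB v'
    refine le_trans (csInf_le ?_ ?_) h5
    · refine ⟨0, ?_⟩
      rintro s ⟨u, -, -, -, -, rfl⟩
      positivity
    · exact ⟨u, h1, h2, h3, h4, rfl⟩
  · obtain ⟨u, h1, h2, h3, h4, -⟩ := hB v
    refine le_csInf ⟨_, u, h1, h2, h3, h4, rfl⟩ ?_
    rintro s ⟨u, h1, h2, h3, h4, rfl⟩
    exact hv u h1 h2 h3 h4

/-! ### Choice of the scales -/

/-- A function dominating the tent `k * min (y - p) (q - y)` dominates the parabola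
`k * (y - p) * (q - y) / (q - p)`, whose integral is `k * (q - p) ^ 2 / 6`. -/
theorem tent_integral {F : ℝ → ℝ} (hF : Continuous F) {p q k l : ℝ} (hpq : p < q) (hk : 0 ≤ k)
    (hl : 0 ≤ l) (hlpq : l ≤ q - p)
    (h : ∀ y ∈ Icc p q, k * min (y - p) (q - y) ≤ F y) :
    k * l ^ 2 / 6 ≤ ∫ y in p..q, F y := by
  have hd : 0 < q - p := by linarith
  have h1 : ∫ y in p..q, k / (q - p) * ((y - p) * (q - y)) = k * (q - p) ^ 2 / 6 := by
    have e : ∀ y : ℝ, HasDerivAt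
        (fun y : ℝ => k / (q - p) * ((q - p) * (y - p) ^ 2 / 2 - (y - p) ^ 3 / 3))
        (k / (q - p) * ((y - p) * (q - y))) y := by
      intro y
      have h0 : HasDerivAt (fun y : ℝ => y - p) 1 y := (hasDerivAt_id y).sub_const p
      have := ((((h0.pow 2).const_mul (q - p)).div_const 2).sub
        ((h0.pow 3).div_const 3)).const_mul (k / (q - p))
      refine this.congr_deriv ?_
      simp only [Nat.cast_ofNat]
      ring
    rw [intervalIntegral.integral_eq_sub_of_hasDerivAt (fun y _ => e y)
      (Continuous.intervalIntegrable (by fun_prop) _ _)]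
    field_simp
    ring
  have h2 : k * l ^ 2 / 6 ≤ k * (q - p) ^ 2 / 6 := by gcongr
  refine h2.trans (h1 ▸ ?_)
  refine intervalIntegral.integral_mono_on hpq.le (Continuous.intervalIntegrable (by fun_prop) _ _)
    (hF.intervalIntegrable _ _) fun y hy => le_trans ?_ (h y hy)
  rw [div_mul_eq_mul_div, mul_div_assoc]
  refine mul_le_mul_of_nonneg_left ?_ hk
  have hy1 : 0 ≤ y - p := by linarith [hy.1]
  have hy2 : 0 ≤ q - y := by linarith [hy.2]
  rw [div_le_iff₀ hd]
  rcases le_total (y - p) (q - y) with h3 | h3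
  · rw [min_eq_left h3]; nlinarith
  · rw [min_eq_right h3]; nlinarith

/-- The hypothesis `d ≥ N² h^{2/3}` in terms of `s = d^{1/2}`. -/
theorem mul_le_cube {N h s : ℝ} (hN : 1 ≤ N) (hh : 0 < h) (hs : 0 ≤ s)
    (H : N ^ 2 * h ^ ((2:ℝ)/3) ≤ s ^ 2) : N * h ≤ s ^ 3 := by
  set r := h ^ ((1:ℝ)/3) with hr
  have hr0 : 0 < r := Real.rpow_pos_of_pos hh _
  have h2 : h ^ ((2:ℝ)/3) = r ^ 2 := by
    rw [hr, ← Real.rpow_natCast, ← Real.rpow_mul hh.le]; norm_num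
  have h3 : h = r ^ 3 := by
    rw [hr, ← Real.rpow_natCast, ← Real.rpow_mul hh.le]; norm_num
  rw [h2, ← mul_pow] at H
  have h4 : N * r ≤ s := (abs_le_of_sq_le_sq' H hs).2
  calc N * h = N * r ^ 3 := by rw [← h3]
    _ ≤ N ^ 3 * r ^ 3 := by gcongr; exact le_self_pow₀ hN (by norm_num)
    _ = (N * r) ^ 3 := by ring
    _ ≤ s ^ 3 := by gcongr

/-- The scale `√(h / (k s))` is at most `c s` once `s³` dominates `h`. -/
theorem scale_le {h s k c : ℝ} (hs : 0 < s) (hk : 0 < k) (hc : 0 < c)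
    (H : h ≤ k * c ^ 2 * s ^ 3) : Real.sqrt (h / (k * s)) ≤ c * s := by
  refine Real.sqrt_le_iff.2 ⟨by positivity, ?_⟩
  rw [div_le_iff₀ (by positivity)]
  linarith [show (c * s) ^ 2 * (k * s) = k * c ^ 2 * s ^ 3 by ring]

theorem stmt_6
    (g : ℝ → ℂ) (a b : ℝ) (xp xm : ℝ → ℝ)
    (hg : ContDiff ℝ (⊤ : ℕ∞) g) (hper : ∀ x, g (x + 2 * Real.pi) = g x)
    (hab : a < b) (hb2 : b < a + 2 * Real.pi)
    (hga : (g a).im = 0) (hgb : 0 < (g b).im)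
    (hmin : StrictMonoOn (fun x => (g x).im) (Icc a b))
    (hmax : StrictAntiOn (fun x => (g x).im) (Icc b (a + 2 * Real.pi)))
    (hcrit : ∀ x ∈ Ico a (a + 2 * Real.pi),
      deriv (fun x => (g x).im) x = 0 → x = a ∨ x = b)
    (ha'' : 0 < iteratedDeriv 2 (fun x => (g x).im) a)
    (hb'' : iteratedDeriv 2 (fun x => (g x).im) b < 0)
    (hxm : ∀ t ∈ Ioo 0 (g b).im, xm t ∈ Ioo a b ∧ (g (xm t)).im = t)
    (hxp : ∀ t ∈ Ioo 0 (g b).im, xp t ∈ Ioo (b - 2 * Real.pi) a ∧ (g (xp t)).im = t)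
    (K₀ : ℝ) (hK₀ : 0 < K₀) :
    ∃ M C : ℝ, 1 ≤ M ∧ 1 ≤ C ∧ ∃ h₀ : ℝ, 0 < h₀ ∧
      ∀ h : ℝ, 0 < h → h < h₀ →
      ∀ z : ℂ, |z.re| ≤ K₀ → M * h ^ ((2:ℝ)/3) ≤ min z.im ((g b).im - z.im) →
        t0sq g h z ≤ C * (min z.im ((g b).im - z.im)) ^ ((1:ℝ)/2) * h *
            Real.exp (-(2 * Sfun g xp xm z.im) / h) ∧
        (min z.im ((g b).im - z.im)) ^ ((1:ℝ)/2) * h / C ≤ t1sq g h z - t0sq g h z := by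
  have hφ : ContDiff ℝ (⊤ : ℕ∞) (fun x => (g x).im) := Complex.imCLM.contDiff.comp hg
  have hφc : Continuous (fun x => (g x).im) := hφ.continuous
  have hφper : ∀ x, (g (x + 2 * Real.pi)).im = (g x).im := fun x => by rw [hper]
  obtain ⟨κ, L, c, hκ, hL, hc, hgeo⟩ := geometry (fun x => (g x).im) a b hφ hφper hab hb2 hga
    hmin hmax hcrit ha'' hb''
  obtain ⟨K, hK, hKst, hst1⟩ := smoothTransition_deriv_bound
  set C₁ := 32 * K ^ 2 * Real.exp (4 * L) with hC₁
  have hC₁0 : 0 < C₁ := by positivity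
  -- the action satisfies `S ≥ c₂ s³`
  set c₂ := 2 / 3 * κ * c ^ 2 with hc₂
  have hc₂0 : 0 < c₂ := by positivity
  -- the four requirements on `N` make the two length scales and the tunnelling factor small
  obtain ⟨N, hN1, hNc, hNκ, hNS⟩ : ∃ N : ℝ, 1 ≤ N ∧ 1 ≤ 1 * c ^ 2 * N ∧ 1 ≤ κ * c ^ 2 * N ∧
      C₁ ≤ κ / 32 * (2 * c₂ * N) := by
    refine ⟨1 + 1 / (1 * c ^ 2) + 1 / (κ * c ^ 2) + C₁ / (κ / 32 * (2 * c₂)), ?_, ?_, ?_, ?_⟩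
    · have : 0 ≤ 1 / (1 * c ^ 2) + 1 / (κ * c ^ 2) + C₁ / (κ / 32 * (2 * c₂)) := by positivity
      linarith
    · rw [← div_le_iff₀' (by positivity)]
      have : 0 ≤ 1 / (κ * c ^ 2) + C₁ / (κ / 32 * (2 * c₂)) := by positivity
      linarith
    · rw [← div_le_iff₀' (by positivity)]
      have : 0 ≤ 1 / (1 * c ^ 2) + C₁ / (κ / 32 * (2 * c₂)) := by positivity
      linarith
    · rw [← mul_assoc, ← div_le_iff₀' (by positivity)]
      have : 0 ≤ 1 / (1 * c ^ 2) + 1 / (κ * c ^ 2) := by positivity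
      linarith
  refine ⟨N ^ 2, max 1 (max C₁ (32 / κ)), one_le_pow₀ hN1, le_max_left _ _, 1, one_pos, ?_⟩
  intro h hh _ z _ hd
  set t := z.im with ht
  set d := min t ((g b).im - t) with hdd
  have hd0 : 0 < d := lt_of_lt_of_le (by positivity) hd
  have htI : t ∈ Ioo 0 (g b).im :=
    ⟨lt_of_lt_of_le hd0 (min_le_left _ _), by
      have := lt_of_lt_of_le hd0 (min_le_right t ((g b).im - t)); linarith⟩
  rw [← Real.sqrt_eq_rpow]
  set s := Real.sqrt d with hs
  have hs0 : 0 < s := Real.sqrt_pos.2 hd0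
  have hs2 : s ^ 2 = d := Real.sq_sqrt hd0.le
  obtain ⟨hqm, hq⟩ := hxm t htI
  obtain ⟨hpm, hp⟩ := hxp t htI
  set p := xp t with hpd
  set q := xm t with hqd
  obtain ⟨g1, g2, g3, g4, g5⟩ := hgeo t htI s hs0.le hs2 p hpm hp q hqm hq
  have hNh : N * h ≤ s ^ 3 := mul_le_cube hN1 hh hs0.le (by rw [hs2]; exact hd)
  have hcs : 0 < c * s := by positivity
  have hpq : p < q := by linarith
  have hpq' : q - 2 * Real.pi < p := by linarith
  have scale : ∀ k : ℝ, 0 < k → ∀ r : ℝ, 0 < r → 1 ≤ k * r ^ 2 * N →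
      Real.sqrt (h / (k * s)) ≤ r * s := by
    intro k hk r hr hkr
    refine scale_le hs0 hk hr ?_
    calc h ≤ (k * r ^ 2 * N) * h := le_mul_of_one_le_left hh.le hkr
      _ = k * r ^ 2 * (N * h) := by ring
      _ ≤ k * r ^ 2 * s ^ 3 := by gcongr
  -- the action
  have hS : c₂ * s ^ 3 ≤ Sfun g xp xm t := by
    have e : c₂ * s ^ 3 = κ * s * (2 * c * s) ^ 2 / 6 := by rw [hc₂]; ring
    rw [e]
    refine le_min ?_ ?_
    · exact tent_integral (continuous_const.sub hφc) hpq (by positivity) (by positivity) g1 g3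
    · rw [intervalIntegral.integral_symm, ← intervalIntegral.integral_neg]
      refine tent_integral (continuous_const.sub hφc).neg hpq' (by positivity) (by positivity)
        g2 fun y hy => ?_
      rw [neg_sub, min_comm]
      exact g4 y hy
  -- the quasimode at scale `w = √(h / s)`
  have hup : t0sq g h z ≤ C₁ * s * h * Real.exp (-(2 * Sfun g xp xm t) / h) := by
    set w := Real.sqrt (h / (1 * s)) with hw
    have hw0 : 0 < w := Real.sqrt_pos.2 (by positivity)
    have hw2 : w ^ 2 = h / s := by rw [hw, one_mul]; exact Real.sq_sqrt (by positivity)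
    have hwc : w ≤ c * s := scale 1 one_pos c hc hNc
    have hws : w ≤ s := 
      (scale 1 one_pos 1 one_pos (by simpa using hN1)).trans_eq (one_mul s)
    have := upper_bound (g := g) (h := h) (z := z) (p := p) (q := q) (w := w) (L := L * s)
      (S := Sfun g xp xm t) hKst hst1 hg hper hh hw0 (by positivity) (by linarith) (by linarith)
      hp hq (fun x y hx hy => g5 x y hx (hy.trans hws)) (min_le_left _ _) (min_le_right _ _)
    refine this.trans (le_of_eq ?_)
    have e1 : L * s * w ^ 2 / h = L := by rw [hw2]; field_simp
    have e2 : h ^ 2 / w ^ 2 = s * h := by rw [hw2]; field_simp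
    rw [e1, e2, hC₁]
    ring
  -- the spectral gap
  have hlow : κ * s * h / 16 ≤ t1sq g h z := by
    set w := Real.sqrt (h / (κ * s)) with hw
    have hw0 : 0 < w := Real.sqrt_pos.2 (by positivity)
    have hw2 : κ * s * w ^ 2 = h := by
      rw [hw, Real.sq_sqrt (by positivity)]; field_simp
    have hwc : w ≤ c * s := scale κ hκ c hc hNκ
    exact le_t1sq hg.continuous (lower_bound hg.continuous hper hh (by positivity) hw0 hw2
      (by linarith) (by linarith) g3 g4)
  have hexp : C₁ * Real.exp (-(2 * Sfun g xp xm t) / h) ≤ κ / 32 := by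
    have e1 : -(2 * Sfun g xp xm t) / h ≤ -(2 * c₂ * N) := by
      rw [div_le_iff₀ hh]
      have : c₂ * (N * h) ≤ c₂ * s ^ 3 := by gcongr
      linarith
    have e2 : Real.exp (-(2 * c₂ * N)) ≤ 1 / (2 * c₂ * N) := by
      rw [Real.exp_neg, ← one_div]
      exact one_div_le_one_div_of_le (by positivity) (by linarith [Real.add_one_le_exp (2 * c₂ * N)])
    calc C₁ * Real.exp (-(2 * Sfun g xp xm t) / h) ≤ C₁ * (1 / (2 * c₂ * N)) := by
          gcongr; exact (Real.exp_le_exp.2 e1).trans e2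
      _ ≤ κ / 32 := by
          rw [mul_one_div, div_le_iff₀ (by positivity)]; exact hNS
  refine ⟨hup.trans ?_, ?_⟩
  · have : C₁ ≤ max 1 (max C₁ (32 / κ)) := (le_max_left _ _).trans (le_max_right _ _)
    gcongr
  · have e1 : s * h / max 1 (max C₁ (32 / κ)) ≤ s * h / (32 / κ) := by
      gcongr
      exact (le_max_right _ _).trans (le_max_right _ _)
    have e2 : s * h / (32 / κ) = κ * s * h / 32 := by field_simp
    have e3 : C₁ * Real.exp (-(2 * Sfun g xp xm t) / h) * (s * h) ≤ κ / 32 * (s * h) := by gcongr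
    linarith


end
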